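/- arXiv:1111.4655 — 2 statements merged into one kernel-verified Lean document; each statement's English description precedes it below -/
import Mathlib

section
/- Let d ∈ ℂ, M > 0, and let (μ_k)_{k∈ℤ} be complex numbers of the form μ_k = k + d_k with d_0 = 0 (so μ_0 = 0), |d_k − d| ≤ M/|k| for all k ≠ 0, and μ_k ≠ μ_l whenever k ≠ l. Then the limit f(z) = lim_{K→∞} z·∏_{0<|k|≤K} (1 − z/μ_k) exists locally uniformly on ℂ and defines an entire function of sine type. That is: (a) f is entire of exponential type π; (b) the zeros {μ_k} of f are separated: inf_{k≠l} |μ_k − μ_l| > 0; (c) there exist positive constants A, B, H such that A e^{π|Im z|} ≤ |f(z)| ≤ B e^{π|Im z|} for every z ∈ ℂ with |Im z| ≥ H. -/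
open Real Filter

lemma prod_pair (g : ℤ → ℂ) (K : ℕ) :
    ∏ k ∈ (Finset.Icc (-(K:ℤ)) (K:ℤ)).erase 0, g k
      = ∏ j ∈ Finset.range K, (g ((j:ℤ)+1) * g (-((j:ℤ)+1))) := by
  induction K with
  | zero => simp
  | succ K ih =>
    rw [Finset.prod_range_succ, ← ih]
    have : (Finset.Icc (-((K+1:ℕ):ℤ)) ((K+1:ℕ):ℤ)).erase 0
        = insert ((K:ℤ)+1) (insert (-((K:ℤ)+1)) ((Finset.Icc (-(K:ℤ)) (K:ℤ)).erase 0)) := by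
      ext x
      simp only [Finset.mem_erase, Finset.mem_Icc, Finset.mem_insert]
      push_cast
      omega
    rw [this, Finset.prod_insert, Finset.prod_insert]
    · ring
    · simp only [Finset.mem_erase, Finset.mem_Icc]; omega
    · simp only [Finset.mem_erase, Finset.mem_Icc, Finset.mem_insert]; omega

lemma sum_inv_sq_bound : ∃ T : ℝ, 0 ≤ T ∧ ∀ w : ℂ, 1 ≤ |w.im| → ∀ s : Finset ℤ,
    ∑ k ∈ s, 1 / ‖w - k‖ ^ 2 ≤ T := by
  have hs : Summable (fun m : ℤ => 2 / ((m:ℝ)^2 + 1)) := by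
    have h1 : Summable (fun m : ℤ => 2 * (1 / (m:ℝ)^2)) :=
      (Real.summable_one_div_int_pow.mpr (by norm_num)).mul_left 2
    have h2 : Summable (fun m : ℤ => if m = 0 then (2:ℝ) else 0) :=
      summable_of_hasFiniteSupport ((Set.finite_singleton (0:ℤ)).subset (by
        intro x hx; by_contra h; simp_all))
    refine Summable.of_nonneg_of_le (fun m => by positivity) (fun m => ?_) (h1.add h2)
    by_cases h : m = 0
    · simp [h]
    · have : (0:ℝ) < (m:ℝ)^2 := by positivity
      simp only [h, if_false, add_zero]
      rw [mul_one_div]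
      gcongr; linarith
  refine ⟨∑' m : ℤ, 2 / ((m:ℝ)^2 + 1), tsum_nonneg (fun m => by positivity), ?_⟩
  intro w hw s
  set n := round w.re with hn
  have hterm : ∀ k ∈ s, 1 / ‖w - k‖ ^ 2 ≤ 2 / (((k - n : ℤ):ℝ)^2 + 1) := by
    intro k _
    have h1 : ‖w - k‖^2 = (w.re - k)^2 + w.im^2 := by
      rw [← Complex.normSq_eq_norm_sq, Complex.normSq_apply]; simp; ring
    have h2 : 1 ≤ w.im^2 := by rw [← sq_abs]; nlinarith
    have h3 := abs_le.mp (abs_sub_round w.re)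
    rw [← hn] at h3
    rw [h1, div_le_div_iff₀ (by nlinarith [sq_nonneg (w.re - k)]) (by positivity)]
    push_cast
    have h4 : (w.re - n)^2 ≤ 1/4 := by nlinarith
    nlinarith [sq_nonneg ((w.re - k) + (w.re - n))]
  calc _ ≤ ∑ k ∈ s, 2 / (((k - n : ℤ):ℝ)^2 + 1) := Finset.sum_le_sum hterm
    _ ≤ ∑' k : ℤ, 2 / (((k - n : ℤ):ℝ)^2 + 1) := by
        refine Summable.sum_le_tsum s (fun i _ => by positivity) ?_
        exact hs.comp_injective (sub_left_injective (b := n))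
    _ = _ := (Equiv.subRight n).tsum_eq (fun m : ℤ => 2 / ((m:ℝ)^2 + 1))

lemma norm_one_add_bounds (x : ℂ) (hx : ‖x‖ ≤ 1/2) :
    Real.exp (-(2*‖x‖)) ≤ ‖1 + x‖ ∧ ‖1 + x‖ ≤ Real.exp ‖x‖ := by
  constructor
  · have h1 : 1 - ‖x‖ ≤ ‖1 + x‖ := by
      have := norm_sub_norm_le (1:ℂ) (-x)
      simpa using this
    have h2 := Real.add_one_le_exp (2*‖x‖)
    have h0 := norm_nonneg x
    rw [Real.exp_neg]
    calc (Real.exp (2*‖x‖))⁻¹ ≤ (2*‖x‖+1)⁻¹ := by gcongr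
      _ ≤ 1 - ‖x‖ := by
        rw [inv_le_iff_one_le_mul₀ (by positivity)]; nlinarith
      _ ≤ _ := h1
  · calc ‖1+x‖ ≤ ‖x‖ + 1 := by
          have := norm_add_le (1:ℂ) x; simp at this; linarith
      _ ≤ _ := Real.add_one_le_exp _

lemma prod_bounds (s : Finset ℤ) (x : ℤ → ℂ) (S : ℝ) (hx : ∀ k ∈ s, ‖x k‖ ≤ 1/2)
    (hS : ∑ k ∈ s, ‖x k‖ ≤ S) :
    Real.exp (-(2*S)) ≤ ‖∏ k ∈ s, (1 + x k)‖ ∧ ‖∏ k ∈ s, (1 + x k)‖ ≤ Real.exp S := by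
  rw [norm_prod]
  constructor
  · calc Real.exp (-(2*S)) ≤ Real.exp (∑ k ∈ s, (-(2*‖x k‖))) := by
          gcongr; rw [Finset.sum_neg_distrib, ← Finset.mul_sum]; linarith
      _ = ∏ k ∈ s, Real.exp (-(2*‖x k‖)) := Real.exp_sum _ _
      _ ≤ _ := Finset.prod_le_prod (fun i _ => (Real.exp_pos _).le)
          (fun i hi => (norm_one_add_bounds _ (hx i hi)).1)
  · calc _ ≤ ∏ k ∈ s, Real.exp (‖x k‖) := Finset.prod_le_prod (fun i _ => norm_nonneg _)
          (fun i hi => (norm_one_add_bounds _ (hx i hi)).2)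
      _ = Real.exp (∑ k ∈ s, ‖x k‖) := (Real.exp_sum _ _).symm
      _ ≤ _ := by gcongr

lemma norm_sin_bounds (u : ℂ) (hu : 1 ≤ |u.im|) :
    Real.exp |u.im| / 4 ≤ ‖Complex.sin u‖ ∧ ‖Complex.sin u‖ ≤ Real.exp |u.im| := by
  have h1 : ‖Complex.exp (-u * Complex.I)‖ = Real.exp u.im := by
    rw [Complex.norm_exp]; simp
  have h2 : ‖Complex.exp (u * Complex.I)‖ = Real.exp (-u.im) := by
    rw [Complex.norm_exp]; simp
  have h3 : ‖Complex.sin u‖ = ‖Complex.exp (-u * Complex.I) - Complex.exp (u * Complex.I)‖ / 2 := by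
    rw [Complex.sin]; simp
  have ha := norm_sub_le (Complex.exp (-u * Complex.I)) (Complex.exp (u * Complex.I))
  have hb := abs_le.mp (abs_norm_sub_norm_le (Complex.exp (-u * Complex.I)) (Complex.exp (u * Complex.I)))
  rw [h1, h2] at ha hb
  rw [h3]
  have key : ∀ v : ℝ, 1 ≤ v → Real.exp (-v) ≤ Real.exp v / 2 := by
    intro v hv
    have : Real.exp v = Real.exp (-v) * Real.exp (2*v) := by rw [← Real.exp_add]; ring_nf
    have h5 := Real.add_one_le_exp (2*v)
    have h6 := Real.exp_pos (-v)
    rw [this]; nlinarith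
  rcases abs_cases u.im with ⟨h, h'⟩ | ⟨h, h'⟩
  · rw [h] at hu ⊢
    have := key _ hu
    have := Real.exp_pos (u.im)
    constructor <;> linarith
  · rw [h] at hu ⊢
    have := key _ hu
    rw [neg_neg] at this
    have := Real.exp_pos (-u.im)
    constructor <;> linarith

lemma dist_int_bound (d : ℂ) (M : ℝ) (hM : 0 < M) (μ : ℤ → ℂ) (hμ0 : μ 0 = 0)
    (hform : ∀ k : ℤ, k ≠ 0 → ‖μ k - (k:ℂ) - d‖ ≤ M / |(k:ℝ)|) (k : ℤ) :
    ‖μ k - (k:ℂ)‖ ≤ ‖d‖ + M := by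
  by_cases hk : k = 0
  · subst hk; simp [hμ0]; positivity
  · have h1 := hform k hk
    have h2 : (1:ℝ) ≤ |(k:ℝ)| := by exact_mod_cast Int.one_le_abs hk
    have h3 : M / |(k:ℝ)| ≤ M := div_le_self hM.le h2
    have h4 := norm_add_le (μ k - (k:ℂ) - d) d
    rw [sub_add_cancel] at h4
    linarith

lemma separated (d : ℂ) (M : ℝ) (hM : 0 < M) (μ : ℤ → ℂ) (hμ0 : μ 0 = 0)
    (hform : ∀ k : ℤ, k ≠ 0 → ‖μ k - (k:ℂ) - d‖ ≤ M / |(k:ℝ)|)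
    (hinj : ∀ k l : ℤ, k ≠ l → μ k ≠ μ l) :
    ∃ η > (0:ℝ), ∀ k l : ℤ, k ≠ l → η ≤ ‖μ k - μ l‖ := by
  have hD := dist_int_bound d M hM μ hμ0 hform
  set D := ‖d‖ + M with hDdef
  have hDM : M ≤ D := by have := norm_nonneg d; linarith
  obtain ⟨N, hN⟩ := exists_nat_ge (6 * D + 1)
  -- far case
  have far : ∀ k l : ℤ, k ≠ l → (N:ℝ) < |(k:ℝ)| → 1/2 ≤ ‖μ k - μ l‖ := by
    intro k l hkl hk
    have hkl1 : (1:ℝ) ≤ |(k:ℝ) - l| := by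
      exact_mod_cast Int.one_le_abs (sub_ne_zero.mpr hkl)
    by_cases hl : 4 * M ≤ |(l:ℝ)|
    · have hk0 : k ≠ 0 := by rintro rfl; simp at hk; linarith [(Nat.cast_nonneg N : (0:ℝ) ≤ N)]
      have hl0 : l ≠ 0 := by rintro rfl; simp at hl; linarith
      have a1 := hform k hk0
      have a2 := hform l hl0
      have b1 : M / |(k:ℝ)| ≤ 1/4 := by
        rw [div_le_iff₀ (by linarith [(Nat.cast_nonneg N : (0:ℝ) ≤ N)])]; linarith
      have b2 : M / |(l:ℝ)| ≤ 1/4 := by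
        rw [div_le_iff₀ (by linarith)]; linarith
      have e : ((k:ℂ) - l) = (μ k - μ l) - (μ k - k - d) + (μ l - l - d) := by ring
      have c1 : ‖(k:ℂ) - l‖ = |(k:ℝ) - l| := by
        rw [← Real.norm_eq_abs, ← Complex.norm_real]; push_cast; rfl
      have c2 := norm_add_le ((μ k - μ l) - (μ k - k - d)) (μ l - l - d)
      have c3 := norm_sub_le (μ k - μ l) (μ k - k - d)
      rw [← e, c1] at c2
      linarith
    · push Not at hl
      have a1 := hD k
      have a2 := hD l
      have e : ((k:ℂ) - l) = (μ k - μ l) - (μ k - k) + (μ l - l) := by ring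
      have c1 : ‖(k:ℂ) - l‖ = |(k:ℝ) - l| := by
        rw [← Real.norm_eq_abs, ← Complex.norm_real]; push_cast; rfl
      have c2 := norm_add_le ((μ k - μ l) - (μ k - k)) (μ l - l)
      have c3 := norm_sub_le (μ k - μ l) (μ k - k)
      rw [← e, c1] at c2
      have := abs_sub_abs_le_abs_sub (k:ℝ) l
      linarith
  -- near case
  let s : Finset (ℤ × ℤ) := ((Finset.Icc (-(N:ℤ)) N) ×ˢ (Finset.Icc (-(N:ℤ)) N)).filter
    (fun p => p.1 ≠ p.2)
  have near : ∃ η > (0:ℝ), ∀ p ∈ s, η ≤ ‖μ p.1 - μ p.2‖ := by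
    by_cases hs : s.Nonempty
    · obtain ⟨p, hp, hmin⟩ := Finset.exists_min_image s (fun p => ‖μ p.1 - μ p.2‖) hs
      refine ⟨_, ?_, hmin⟩
      exact norm_pos_iff.mpr (sub_ne_zero.mpr (hinj _ _ (Finset.mem_filter.mp hp).2))
    · rw [Finset.not_nonempty_iff_eq_empty] at hs
      exact ⟨1, one_pos, by simp [hs]⟩
  obtain ⟨η, hη, hnear⟩ := near
  refine ⟨min η (1/2), by positivity, fun k l hkl => ?_⟩
  by_cases hk : (N:ℝ) < |(k:ℝ)|
  · exact (min_le_right _ _).trans (far k l hkl hk)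
  by_cases hl : (N:ℝ) < |(l:ℝ)|
  · rw [norm_sub_rev]
    exact (min_le_right _ _).trans (far l k hkl.symm hl)
  refine (min_le_left _ _).trans (hnear (k, l) ?_)
  push Not at hk hl
  have hk' : |k| ≤ N := by exact_mod_cast hk
  have hl' : |l| ≤ N := by exact_mod_cast hl
  have := abs_le.mp hk'
  have := abs_le.mp hl'
  simp only [s, Finset.mem_filter, Finset.mem_product, Finset.mem_Icc]
  exact ⟨⟨by omega, by omega⟩, hkl⟩

lemma lower_lin (D : ℝ) (hD0 : 0 ≤ D) (μ : ℤ → ℂ) (hμ0 : μ 0 = 0)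
    (hD : ∀ k, ‖μ k - (k:ℂ)‖ ≤ D) (η : ℝ) (hη : 0 < η)
    (hsep : ∀ k l : ℤ, k ≠ l → η ≤ ‖μ k - μ l‖) :
    ∃ L : ℝ, 0 < L ∧ ∀ k : ℤ, k ≠ 0 → ‖(μ k)⁻¹‖ ≤ L / |(k:ℝ)| := by
  refine ⟨1 + D / η, by positivity, fun k hk => ?_⟩
  have h1 := hsep k 0 hk
  rw [hμ0, sub_zero] at h1
  have h2 : |(k:ℝ)| ≤ ‖μ k‖ + D := by
    have c1 : ‖(k:ℂ)‖ = |(k:ℝ)| := by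
      rw [← Real.norm_eq_abs, ← Complex.norm_real]; push_cast; rfl
    have := norm_sub_le (μ k) (μ k - k)
    rw [sub_sub_cancel, c1] at this
    linarith [hD k]
  have hk0 : 0 < |(k:ℝ)| := by positivity
  have h3 : 0 < ‖μ k‖ := by linarith
  rw [norm_inv, le_div_iff₀ hk0, inv_mul_le_iff₀ h3]
  have : D ≤ ‖μ k‖ * (D / η) := by
    rw [mul_div_assoc', le_div_iff₀ hη]; nlinarith
  linarith

lemma summable_shift (C : ℝ) : Summable (fun j : ℕ => C / ((j:ℝ)+1)^2) := by
  have h := (summable_nat_add_iff 1).mpr (Real.summable_one_div_nat_pow.mpr (by norm_num : 1 < 2))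
  have := h.mul_left C
  refine this.congr (fun j => ?_)
  push_cast; ring

lemma pair_conv (D L : ℝ) (hD0 : 0 ≤ D) (hL : 0 < L) (μ : ℤ → ℂ) 
    (hD : ∀ k, ‖μ k - (k:ℂ)‖ ≤ D) (hne : ∀ k : ℤ, k ≠ 0 → μ k ≠ 0)
    (hlow : ∀ k : ℤ, k ≠ 0 → ‖(μ k)⁻¹‖ ≤ L / |(k:ℝ)|) :
    ∃ g : ℂ → ℂ, TendstoLocallyUniformly
        (fun (K : ℕ) (z : ℂ) =>
          z * ∏ k ∈ (Finset.Icc (-(K:ℤ)) (K:ℤ)).erase 0, (1 - z / μ k)) g atTop := by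
  let a : ℕ → ℂ → ℂ := fun j z => (1 - z / μ ((j:ℤ)+1)) * (1 - z / μ (-((j:ℤ)+1))) - 1
  have ha : ∀ j z, ‖a j z‖ ≤ L^2 * (2 * D * ‖z‖ + ‖z‖^2) / ((j:ℝ)+1)^2 := by
    intro j z
    have hk : ((j:ℤ)+1) ≠ 0 := by omega
    have hk' : -((j:ℤ)+1) ≠ 0 := by omega
    have e : a j z = (μ ((j:ℤ)+1))⁻¹ * (μ (-((j:ℤ)+1)))⁻¹ *
        (-(z * ((μ ((j:ℤ)+1) - ((j:ℤ)+1 : ℤ)) + (μ (-((j:ℤ)+1)) - (-((j:ℤ)+1) : ℤ)))) + z^2) := by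
      have := hne _ hk
      have := hne _ hk'
      simp only [a]
      push_cast
      field_simp
      ring
    have hj : (0:ℝ) < (j:ℝ) + 1 := by positivity
    have l1 := hlow _ hk
    have l2 := hlow _ hk'
    have ab : |(((j:ℤ)+1 : ℤ):ℝ)| = (j:ℝ)+1 := by push_cast; exact abs_of_pos hj
    have ab' : |((-((j:ℤ)+1) : ℤ):ℝ)| = (j:ℝ)+1 := by
      rw [Int.cast_neg, abs_neg]; exact ab
    rw [ab] at l1
    rw [ab'] at l2
    rw [e, norm_mul, norm_mul]
    have m1 : ‖(-(z * ((μ ((j:ℤ)+1) - ((j:ℤ)+1 : ℤ)) + (μ (-((j:ℤ)+1)) - (-((j:ℤ)+1) : ℤ)))) + z^2)‖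
        ≤ 2 * D * ‖z‖ + ‖z‖^2 := by
      refine (norm_add_le _ _).trans ?_
      rw [norm_neg, norm_mul, norm_pow]
      have := norm_add_le (μ ((j:ℤ)+1) - ((j:ℤ)+1 : ℤ)) (μ (-((j:ℤ)+1)) - (-((j:ℤ)+1) : ℤ))
      have h1 := hD ((j:ℤ)+1)
      have h2 := hD (-((j:ℤ)+1))
      have h3 : ‖(μ ((j:ℤ)+1) - ((j:ℤ)+1 : ℤ)) + (μ (-((j:ℤ)+1)) - (-((j:ℤ)+1) : ℤ))‖ ≤ 2 * D := by
        linarith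
      nlinarith [norm_nonneg z]
    calc _ ≤ (L / ((j:ℝ)+1)) * (L / ((j:ℝ)+1)) * (2 * D * ‖z‖ + ‖z‖^2) := by
          gcongr
      _ = _ := by field_simp
  refine ⟨fun z => z * ∏' j, (1 + a j z), ?_⟩
  have hP : (fun (K : ℕ) (z : ℂ) =>
          z * ∏ k ∈ (Finset.Icc (-(K:ℤ)) (K:ℤ)).erase 0, (1 - z / μ k))
      = fun K z => z * ∏ j ∈ Finset.range K, (1 + a j z) := by
    funext K z
    rw [prod_pair]
    congr 1
    refine Finset.prod_congr rfl (fun j _ => ?_)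
    simp only [a]; ring
  rw [hP, ← tendstoLocallyUniformlyOn_univ,
    tendstoLocallyUniformlyOn_iff_forall_isCompact isOpen_univ]
  intro S _ hS
  obtain ⟨R, hR0, hR⟩ := hS.isBounded.exists_pos_norm_le
  have hu := (summable_shift (L^2 * (2 * D * R + R^2))).hasProdUniformlyOn_nat_one_add
    (f := a) hS (.of_forall (fun n x hx => by
      refine (ha n x).trans ?_
      have := hR x hx
      gcongr)) (fun n => by simp only [a]; fun_prop)
  have ht := hu.tendstoUniformlyOn_finsetRange
  rw [Metric.tendstoUniformlyOn_iff] at ht ⊢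
  intro ε hε
  filter_upwards [ht (ε / R) (by positivity)] with n hn x hx
  have h1 := hn x hx
  rw [dist_eq_norm] at h1 ⊢
  rw [← mul_sub, norm_mul]
  rw [lt_div_iff₀ hR0] at h1
  calc _ ≤ R * _ := mul_le_mul_of_nonneg_right (hR x hx) (norm_nonneg _)
    _ < ε := by rw [mul_comm]; simpa using h1

lemma const_conv (d : ℂ) (M : ℝ) (D : ℝ) (hM : 0 < M) (μ : ℤ → ℂ)
    (hform : ∀ k : ℤ, k ≠ 0 → ‖μ k - (k:ℂ) - d‖ ≤ M / |(k:ℝ)|)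
    (hD : ∀ k, ‖μ k - (k:ℂ)‖ ≤ D) (hne : ∀ k : ℤ, k ≠ 0 → μ k ≠ 0) :
    ∃ Q : ℂ, Q ≠ 0 ∧ Tendsto (fun K : ℕ => ∏ k ∈ (Finset.Icc (-(K:ℤ)) (K:ℤ)).erase 0, (μ k / k))
      atTop (nhds Q) := by
  let b : ℕ → ℂ := fun j => (μ ((j:ℤ)+1) / ((j:ℤ)+1 : ℤ)) * (μ (-((j:ℤ)+1)) / (-((j:ℤ)+1) : ℤ)) - 1
  have hb : ∀ j, ‖b j‖ ≤ (2 * M + D^2) / ((j:ℝ)+1)^2 := by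
    intro j
    have hk : ((j:ℤ)+1) ≠ 0 := by omega
    have hk' : -((j:ℤ)+1) ≠ 0 := by omega
    have hj : (0:ℝ) < (j:ℝ) + 1 := by positivity
    have ab : |(((j:ℤ)+1 : ℤ):ℝ)| = (j:ℝ)+1 := by push_cast; exact abs_of_pos hj
    have ab' : |((-((j:ℤ)+1) : ℤ):ℝ)| = (j:ℝ)+1 := by
      rw [Int.cast_neg, abs_neg]; exact ab
    have hjc : (j:ℂ) + 1 ≠ 0 := by exact_mod_cast Nat.succ_ne_zero j
    have e : b j = -(((j:ℂ)+1) * ((μ (-((j:ℤ)+1)) - (-((j:ℤ)+1) : ℤ) - d) - (μ ((j:ℤ)+1) - ((j:ℤ)+1 : ℤ) - d))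
        + (μ ((j:ℤ)+1) - ((j:ℤ)+1 : ℤ)) * (μ (-((j:ℤ)+1)) - (-((j:ℤ)+1) : ℤ))) / ((j:ℂ)+1)^2 := by
      simp only [b]
      push_cast
      have : -1 + -(j:ℂ) ≠ 0 := by intro h; apply hjc; linear_combination -h
      have : -((j:ℂ) + 1) ≠ 0 := neg_ne_zero.mpr hjc
      field_simp
      ring
    have l1 := hform _ hk
    have l2 := hform _ hk'
    rw [ab] at l1
    rw [ab'] at l2
    have hn : ‖(j:ℂ)+1‖ = (j:ℝ)+1 := by
      rw [show (j:ℂ)+1 = (((j:ℝ)+1 : ℝ):ℂ) by push_cast; rfl, Complex.norm_real, Real.norm_of_nonneg hj.le]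
    rw [e, norm_div, norm_neg, norm_pow, hn]
    gcongr
    refine (norm_add_le _ _).trans ?_
    rw [norm_mul, norm_mul, hn]
    have h3 := norm_sub_le (μ (-((j:ℤ)+1)) - (-((j:ℤ)+1) : ℤ) - d) (μ ((j:ℤ)+1) - ((j:ℤ)+1 : ℤ) - d)
    have h4 : ‖(μ (-((j:ℤ)+1)) - (-((j:ℤ)+1) : ℤ) - d) - (μ ((j:ℤ)+1) - ((j:ℤ)+1 : ℤ) - d)‖ ≤ 2 * M / ((j:ℝ)+1) := by
      refine (h3.trans (add_le_add l2 l1)).trans_eq ?_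
      ring
    rw [le_div_iff₀ hj] at h4
    have h5 := mul_le_mul (hD ((j:ℤ)+1)) (hD (-((j:ℤ)+1))) (norm_nonneg _) ((norm_nonneg _).trans (hD 0))
    nlinarith
  have hs : Summable (fun j => ‖b j‖) :=
    Summable.of_nonneg_of_le (fun _ => norm_nonneg _) hb (summable_shift _)
  refine ⟨∏' j, (1 + b j), tprod_one_add_ne_zero_of_summable (fun j => ?_) hs, ?_⟩
  · simp only [b, add_sub_cancel]
    have hk : ((j:ℤ)+1) ≠ 0 := by omega
    have hk' : -((j:ℤ)+1) ≠ 0 := by omega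
    exact mul_ne_zero (div_ne_zero (hne _ hk) (Int.cast_ne_zero.mpr hk))
      (div_ne_zero (hne _ hk') (Int.cast_ne_zero.mpr hk'))
  · have := (multipliable_one_add_of_summable hs).hasProd.tendsto_prod_nat
    refine this.congr (fun K => ?_)
    rw [prod_pair]
    refine Finset.prod_congr rfl (fun j _ => ?_)
    simp only [b]; ring

lemma sin_conv (w : ℂ) : Tendsto (fun K : ℕ =>
    (π:ℂ) * w * ∏ k ∈ (Finset.Icc (-(K:ℤ)) (K:ℤ)).erase 0, (1 - w / k))
      atTop (nhds (Complex.sin (π * w))) := by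
  refine (Complex.tendsto_euler_sin_prod w).congr (fun K => ?_)
  rw [prod_pair]
  congr 1
  refine Finset.prod_congr rfl (fun j _ => ?_)
  push_cast
  have hjc : (j:ℂ) + 1 ≠ 0 := by exact_mod_cast Nat.succ_ne_zero j
  rw [div_neg]
  field_simp
  ring

lemma sin_compare (d : ℂ) (M : ℝ) (hM : 0 < M) (μ : ℤ → ℂ)
    (hform : ∀ k : ℤ, k ≠ 0 → ‖μ k - (k:ℂ) - d‖ ≤ M / |(k:ℝ)|)
    (hne : ∀ k : ℤ, k ≠ 0 → μ k ≠ 0)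
    (Q : ℂ) (hQ : Q ≠ 0)
    (hQt : Tendsto (fun K : ℕ => ∏ k ∈ (Finset.Icc (-(K:ℤ)) (K:ℤ)).erase 0, (μ k / k))
      atTop (nhds Q))
    (f : ℂ → ℂ) (hf : ∀ z, Tendsto (fun K : ℕ =>
      z * ∏ k ∈ (Finset.Icc (-(K:ℤ)) (K:ℤ)).erase 0, (1 - z / μ k)) atTop (nhds (f z))) :
    ∃ a b H : ℝ, 0 < a ∧ 0 < b ∧ 1 ≤ H ∧ ∀ z : ℂ, H ≤ |(z - d).im| →
      a * ‖Complex.sin (π * (z - d))‖ ≤ ‖f z‖ ∧ ‖f z‖ ≤ b * ‖Complex.sin (π * (z - d))‖ := by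
  obtain ⟨T, hT0, hT⟩ := sum_inv_sq_bound
  have hZs : Summable (fun m : ℤ => 1 / (m:ℝ)^2) := Real.summable_one_div_int_pow.mpr (by norm_num)
  set Z := ∑' m : ℤ, 1 / (m:ℝ)^2 with hZ
  set S := M * ((Z + T) / 2) with hS
  have hQ' : 0 < ‖Q‖ := norm_pos_iff.mpr hQ
  have hd := norm_nonneg d
  refine ⟨1 / (2 * π) * Real.exp (-(2*S)) / ‖Q‖, 3 / (2 * π) * Real.exp S / ‖Q‖, 1 + 2 * (M + ‖d‖),
    by positivity, by positivity, by linarith, ?_⟩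
  intro z hz
  set w := z - d with hw
  have hwk : ∀ k : ℤ, |w.im| ≤ ‖w - k‖ := fun k => by
    have := Complex.abs_im_le_norm (w - k); simpa using this
  have hw0 : |w.im| ≤ ‖w‖ := Complex.abs_im_le_norm w
  have hwk0 : ∀ k : ℤ, w - k ≠ 0 := fun k => norm_pos_iff.mp (by linarith [hwk k])
  have hwne : w ≠ 0 := norm_pos_iff.mp (by linarith)
  have hx2 : ∀ k : ℤ, k ≠ 0 → ‖-(μ k - k - d) / (w - k)‖ ≤ 1/2 := by
    intro k hk
    have h2 : (1:ℝ) ≤ |(k:ℝ)| := by exact_mod_cast Int.one_le_abs hk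
    have h3 : M / |(k:ℝ)| ≤ M := div_le_self hM.le h2
    have := hwk k
    rw [norm_div, norm_neg, div_le_iff₀ (by linarith)]
    linarith [hform k hk]
  have hxs : ∀ s : Finset ℤ, 0 ∉ s → ∑ k ∈ s, ‖-(μ k - k - d) / (w - k)‖ ≤ S := by
    intro s hs
    have ht : ∀ k ∈ s, ‖-(μ k - k - d) / (w - k)‖ ≤ M / 2 * (1 / (k:ℝ)^2) + M / 2 * (1 / ‖w - k‖^2) := by
      intro k hk
      have hk0 : k ≠ 0 := fun h => hs (h ▸ hk)
      have hkp : 0 < |(k:ℝ)| := by positivity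
      have hp : 0 < ‖w - k‖ := norm_pos_iff.mpr (hwk0 k)
      rw [norm_div, norm_neg]
      calc _ ≤ M / |(k:ℝ)| / ‖w - k‖ := by gcongr; exact hform k hk0
        _ = M * ((1 / |(k:ℝ)|) * (1 / ‖w - k‖)) := by field_simp
        _ ≤ M * (((1 / |(k:ℝ)|)^2 + (1 / ‖w - k‖)^2) / 2) := by
            gcongr; nlinarith [sq_nonneg (1 / |(k:ℝ)| - 1 / ‖w - k‖)]
        _ = _ := by rw [div_pow, div_pow, sq_abs]; ring
    refine (Finset.sum_le_sum ht).trans ?_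
    rw [Finset.sum_add_distrib, ← Finset.mul_sum, ← Finset.mul_sum]
    have h1 : ∑ k ∈ s, 1 / (k:ℝ)^2 ≤ Z := hZs.sum_le_tsum s (fun i _ => by positivity)
    have h2 := hT w (by linarith) s
    rw [hS]
    nlinarith
  have hzw : 1/2 ≤ ‖z / w‖ ∧ ‖z / w‖ ≤ 3/2 := by
    have e : z / w = 1 + d / w := by rw [hw] at hwne ⊢; field_simp; ring
    have h1 : ‖d / w‖ ≤ 1/2 := by
      rw [norm_div, div_le_iff₀ (by linarith)]; linarith
    rw [e]
    have a1 := norm_add_le 1 (d / w)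
    have a2 := norm_sub_norm_le (1:ℂ) (-(d/w))
    simp only [norm_one, norm_neg, sub_neg_eq_add] at a1 a2
    constructor <;> linarith
  have key : ∀ K : ℕ,
      ‖z * ∏ k ∈ (Finset.Icc (-(K:ℤ)) (K:ℤ)).erase 0, (1 - z / μ k)‖ *
      ‖∏ k ∈ (Finset.Icc (-(K:ℤ)) (K:ℤ)).erase 0, (μ k / k)‖
      = ‖(π:ℂ) * w * ∏ k ∈ (Finset.Icc (-(K:ℤ)) (K:ℤ)).erase 0, (1 - w / k)‖ * (‖z / w‖ / π *
        ‖∏ k ∈ (Finset.Icc (-(K:ℤ)) (K:ℤ)).erase 0, (1 + -(μ k - k - d) / (w - k))‖) := by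
    intro K
    have e : (∏ k ∈ (Finset.Icc (-(K:ℤ)) (K:ℤ)).erase 0, (1 - z / μ k)) *
      ∏ k ∈ (Finset.Icc (-(K:ℤ)) (K:ℤ)).erase 0, (μ k / k)
       = (∏ k ∈ (Finset.Icc (-(K:ℤ)) (K:ℤ)).erase 0, (1 - w / k)) *
        ∏ k ∈ (Finset.Icc (-(K:ℤ)) (K:ℤ)).erase 0, (1 + -(μ k - k - d) / (w - k)) := by
      rw [← Finset.prod_mul_distrib, ← Finset.prod_mul_distrib]
      refine Finset.prod_congr rfl (fun k hk => ?_)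
      have hk0 : k ≠ 0 := (Finset.mem_erase.mp hk).1
      have h1 := hne k hk0
      have h2 : (k:ℂ) ≠ 0 := Int.cast_ne_zero.mpr hk0
      have h3 := hwk0 k
      have hz' : z = w + d := by rw [hw]; ring
      rw [hz']
      field_simp
      ring
    have e2 := congrArg norm e
    rw [norm_mul, norm_mul] at e2
    have hn : ‖w‖ ≠ 0 := norm_ne_zero_iff.mpr hwne
    have hpi : ‖(π:ℂ)‖ = π := by rw [Complex.norm_real, Real.norm_of_nonneg Real.pi_pos.le]
    rw [norm_mul, mul_assoc, e2, norm_mul, norm_mul, norm_div, hpi]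
    have := Real.pi_ne_zero
    field_simp
  have hsin := (sin_conv w).norm
  have hP := ((hf z).norm).mul hQt.norm
  have hlow := le_of_tendsto_of_tendsto (hsin.mul_const (1 / (2 * π) * Real.exp (-(2*S)))) hP
    (.of_forall (fun K => by
      show _ ≤ _
      beta_reduce
      rw [key K]
      have hb := (prod_bounds ((Finset.Icc (-(K:ℤ)) (K:ℤ)).erase 0) (fun k => -(μ k - k - d) / (w - k)) S
        (fun k hk => hx2 k (Finset.mem_erase.mp hk).1) (hxs _ (by simp))).1
      have hz1 := hzw.1
      gcongr ?_ * (?_ * ?_)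
      rw [show 1 / (2 * π) = 1/2/π by field_simp]
      gcongr))
  have hupp := le_of_tendsto_of_tendsto hP (hsin.mul_const (3 / (2 * π) * Real.exp S))
    (.of_forall (fun K => by
      show _ ≤ _
      beta_reduce
      rw [key K]
      have hb := (prod_bounds ((Finset.Icc (-(K:ℤ)) (K:ℤ)).erase 0) (fun k => -(μ k - k - d) / (w - k)) S
        (fun k hk => hx2 k (Finset.mem_erase.mp hk).1) (hxs _ (by simp))).2
      have hz1 := hzw.2
      gcongr ?_ * (?_ * ?_)
      rw [show 3 / (2 * π) = 3/2/π by field_simp]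
      gcongr))
  constructor
  · rw [div_mul_eq_mul_div, div_le_iff₀ hQ']; linarith
  · rw [div_mul_eq_mul_div, le_div_iff₀ hQ']; linarith

lemma exp_compare (d : ℂ) (f : ℂ → ℂ) (a b H0 : ℝ) (ha : 0 < a) (hb : 0 < b) (hH : 1 ≤ H0)
    (h : ∀ z : ℂ, H0 ≤ |(z - d).im| →
      a * ‖Complex.sin (π * (z - d))‖ ≤ ‖f z‖ ∧ ‖f z‖ ≤ b * ‖Complex.sin (π * (z - d))‖) :
    ∃ A B H : ℝ, 0 < A ∧ 0 < B ∧ 0 < H ∧ ∀ z : ℂ, H ≤ |z.im| →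
        A * Real.exp (π * |z.im|) ≤ ‖f z‖ ∧ ‖f z‖ ≤ B * Real.exp (π * |z.im|) := by
  have hd := norm_nonneg d
  refine ⟨a / 4 * Real.exp (-(π * ‖d‖)), b * Real.exp (π * ‖d‖), H0 + ‖d‖,
    by positivity, by positivity, by linarith, fun z hz => ?_⟩
  have h1 := Complex.abs_im_le_norm d
  have h2 : |z.im| - ‖d‖ ≤ |(z - d).im| := by
    have := abs_sub_abs_le_abs_sub z.im d.im
    rw [Complex.sub_im]; linarith
  have h3 : |(z - d).im| ≤ |z.im| + ‖d‖ := by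
    have := abs_sub z.im d.im
    rw [Complex.sub_im]; linarith
  have him : |((π:ℂ) * (z - d)).im| = π * |(z - d).im| := by
    rw [Complex.im_ofReal_mul, abs_mul, abs_of_pos Real.pi_pos]
  have hpi := Real.pi_gt_three
  obtain ⟨l, u⟩ := h z (by linarith)
  obtain ⟨sl, su⟩ := norm_sin_bounds ((π:ℂ) * (z - d)) (by rw [him]; nlinarith)
  rw [him] at sl su
  constructor
  · calc _ = a * (Real.exp (π * (|z.im| - ‖d‖)) / 4) := by
          rw [mul_sub, sub_eq_add_neg, Real.exp_add]; ring
      _ ≤ a * (Real.exp (π * |(z - d).im|) / 4) := by gcongr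
      _ ≤ a * ‖Complex.sin (π * (z - d))‖ := by gcongr
      _ ≤ _ := l
  · calc _ ≤ b * ‖Complex.sin (π * (z - d))‖ := u
      _ ≤ b * Real.exp (π * |(z - d).im|) := by gcongr
      _ ≤ b * Real.exp (π * (|z.im| + ‖d‖)) := by gcongr
      _ = _ := by rw [mul_add, Real.exp_add]; ring

lemma norm_le_of_im (u v : ℂ) (hre : u.re = v.re) (him : |u.im| ≤ |v.im|) : ‖u‖ ≤ ‖v‖ := by
  have := sq_le_sq.mpr him
  rw [← abs_of_nonneg (norm_nonneg u), ← abs_of_nonneg (norm_nonneg v), ← sq_le_sq,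
    ← Complex.normSq_eq_norm_sq, ← Complex.normSq_eq_norm_sq, Complex.normSq_apply,
    Complex.normSq_apply, hre]
  nlinarith

lemma shift_bound (D : ℝ) (μ : ℤ → ℂ) (hD0 : 0 ≤ D) (hD : ∀ k, ‖μ k - (k:ℂ)‖ ≤ D)
    (hne : ∀ k : ℤ, k ≠ 0 → μ k ≠ 0)
    (f : ℂ → ℂ) (hf : ∀ z, Tendsto (fun K : ℕ =>
      z * ∏ k ∈ (Finset.Icc (-(K:ℤ)) (K:ℤ)).erase 0, (1 - z / μ k)) atTop (nhds (f z)))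
    (H : ℝ) (z : ℂ) (hz : |z.im| ≤ H) :
    ‖f z‖ ≤ ‖f (z + ((2 * (H + D) : ℝ):ℂ) * Complex.I)‖ := by
  refine le_of_tendsto_of_tendsto (hf _).norm (hf _).norm (.of_forall fun K => ?_)
  show _ ≤ _
  beta_reduce
  have hz' := abs_le.mp hz
  rw [norm_mul, norm_mul, norm_prod, norm_prod]
  gcongr with k hk
  · refine norm_le_of_im _ _ (by simp) ?_
    rw [Complex.add_im, Complex.im_ofReal_mul, Complex.I_im, mul_one, abs_le]
    have := le_abs_self (z.im + 2 * (H + D))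
    constructor <;> linarith
  · have h1 := hne k (Finset.mem_erase.mp hk).1
    have e : ∀ y : ℂ, 1 - y / μ k = (μ k - y) / μ k := fun y => by field_simp
    rw [e, e, norm_div, norm_div]
    gcongr ?_ / _
    refine norm_le_of_im _ _ (by simp) ?_
    have h2 := (Complex.abs_im_le_norm (μ k - (k:ℂ))).trans (hD k)
    rw [Complex.sub_im, Complex.intCast_im, sub_zero] at h2
    have h2 := abs_le.mp h2
    rw [Complex.sub_im, Complex.sub_im, Complex.add_im, Complex.im_ofReal_mul, Complex.I_im, mul_one,
      abs_le]
    have := neg_le_abs ((μ k).im - (z.im + 2 * (H + D)))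
    constructor <;> linarith



/-- **A sufficient condition for a canonical product to be a function of sine type
(Corollary to Levin's theorem).**  If `μ_k = k + d_k` with `μ_0 = 0`, `d_k = d + O(1/k)`
and the `μ_k` pairwise distinct, then `f(z) = z ∏_{k ≠ 0} (1 - z/μ_k)` (symmetric limit)
is an entire function of sine type: it has exponential type exactly `π`, its zeros `μ_k`
are separated, and `A e^{π|Im z|} ≤ |f(z)| ≤ B e^{π|Im z|}` for `|Im z| ≥ H`. -/
theorem sine_type_canonical_product
    (d : ℂ) (M : ℝ) (hM : 0 < M) (μ : ℤ → ℂ)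
    (hμ0 : μ 0 = 0)
    (hform : ∀ k : ℤ, k ≠ 0 → ‖μ k - (k:ℂ) - d‖ ≤ M / |(k:ℝ)|)
    (hinj : ∀ k l : ℤ, k ≠ l → μ k ≠ μ l) :
    ∃ f : ℂ → ℂ,
      -- the symmetric partial products converge locally uniformly to f
      TendstoLocallyUniformly
        (fun (K : ℕ) (z : ℂ) =>
          z * ∏ k ∈ (Finset.Icc (-(K:ℤ)) (K:ℤ)).erase 0, (1 - z / μ k))
        f atTop ∧
      -- (a) f is entire of exponential type π
      Differentiable ℂ f ∧
      (∀ ε > (0:ℝ), ∃ C > (0:ℝ), ∀ z : ℂ, ‖f z‖ ≤ C * Real.exp ((π + ε) * ‖z‖)) ∧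
      (∀ ε > (0:ℝ), ¬ ∃ C > (0:ℝ), ∀ z : ℂ, ‖f z‖ ≤ C * Real.exp ((π - ε) * ‖z‖)) ∧
      -- the μ_k are zeros of f
      (∀ k : ℤ, f (μ k) = 0) ∧
      -- (b) the zeros are separated
      (∃ η > (0:ℝ), ∀ k l : ℤ, k ≠ l → η ≤ ‖μ k - μ l‖) ∧
      -- (c) two-sided exponential bounds away from the real axis
      (∃ A B H : ℝ, 0 < A ∧ 0 < B ∧ 0 < H ∧ ∀ z : ℂ, H ≤ |z.im| →
        A * Real.exp (π * |z.im|) ≤ ‖f z‖ ∧ ‖f z‖ ≤ B * Real.exp (π * |z.im|)) := by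
  have hD := dist_int_bound d M hM μ hμ0 hform
  have hD0 : 0 ≤ ‖d‖ + M := by positivity
  obtain ⟨η, hη, hsep⟩ := separated d M hM μ hμ0 hform hinj
  have hne : ∀ k : ℤ, k ≠ 0 → μ k ≠ 0 := fun k hk => hμ0 ▸ hinj k 0 hk
  obtain ⟨L, hL, hlow⟩ := lower_lin (‖d‖ + M) hD0 μ hμ0 hD η hη hsep
  obtain ⟨f, hf⟩ := pair_conv (‖d‖ + M) L hD0 hL μ hD hne hlow
  have hft : ∀ z, Tendsto (fun K : ℕ =>
      z * ∏ k ∈ (Finset.Icc (-(K:ℤ)) (K:ℤ)).erase 0, (1 - z / μ k)) atTop (nhds (f z)) :=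
    fun z => (tendstoLocallyUniformlyOn_univ.mpr hf).tendsto_at (Set.mem_univ z)
  obtain ⟨Q, hQ, hQt⟩ := const_conv d M (‖d‖ + M) hM μ hform hD hne
  obtain ⟨a, b, H0, ha, hb, hH0, hcmp⟩ := sin_compare d M hM μ hform hne Q hQ hQt f hft
  obtain ⟨A, B, H, hA, hB, hH, hAB⟩ := exp_compare d f a b H0 ha hb hH0 hcmp
  refine ⟨f, hf, ?_, ?_, ?_, ?_, ⟨η, hη, hsep⟩, A, B, H, hA, hB, hH, hAB⟩
  · rw [← differentiableOn_univ]
    refine (tendstoLocallyUniformlyOn_univ.mpr hf).differentiableOn (.of_forall fun K => ?_) isOpen_univ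
    fun_prop
  · intro ε hε
    have hpi := Real.pi_pos
    set D := ‖d‖ + M with hDdef
    refine ⟨B * Real.exp (π * (3 * H + 2 * D)), by positivity, fun z => ?_⟩
    have him := Complex.abs_im_le_norm z
    have hg : Real.exp (π * |z.im|) ≤ Real.exp ((π + ε) * ‖z‖) := by
      gcongr
      nlinarith [norm_nonneg z]
    have h1 : (1:ℝ) ≤ Real.exp (π * (3 * H + 2 * D)) := Real.one_le_exp (by positivity)
    have h2 : (1:ℝ) ≤ Real.exp ((π + ε) * ‖z‖) := Real.one_le_exp (by positivity)
    by_cases hz : H ≤ |z.im|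
    · calc _ ≤ B * Real.exp (π * |z.im|) := (hAB z hz).2
        _ ≤ B * 1 * Real.exp ((π + ε) * ‖z‖) := by rw [mul_one]; gcongr
        _ ≤ _ := by gcongr
    · push Not at hz
      have hs := shift_bound D μ hD0 hD hne f hft H z hz.le
      have hz' := abs_lt.mp hz
      have e : (z + ((2 * (H + D) : ℝ):ℂ) * Complex.I).im = z.im + 2 * (H + D) := by
        rw [Complex.add_im, Complex.im_ofReal_mul, Complex.I_im, mul_one]
      have hpos : 0 ≤ z.im + 2 * (H + D) := by linarith
      have hu := (hAB (z + ((2 * (H + D) : ℝ):ℂ) * Complex.I) (by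
        rw [e, abs_of_nonneg hpos]; linarith)).2
      rw [e, abs_of_nonneg hpos] at hu
      calc _ ≤ B * Real.exp (π * (z.im + 2 * (H + D))) := hs.trans hu
        _ ≤ B * Real.exp (π * (3 * H + 2 * D)) * 1 := by
          rw [mul_one]; gcongr B * Real.exp (π * ?_); linarith
        _ ≤ _ := by gcongr
  · rintro ε hε ⟨C, hC, hbd⟩
    obtain ⟨y, hy1, hy2⟩ : ∃ y : ℝ, H ≤ y ∧ C / A < ε * y := by
      refine ⟨max H ((C / A + 1) / ε), le_max_left _ _, ?_⟩
      have : (C / A + 1) / ε ≤ max H ((C / A + 1) / ε) := le_max_right _ _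
      rw [div_le_iff₀ hε] at this
      linarith
    have hy0 : 0 < y := by linarith
    have hl := (hAB ((y:ℂ) * Complex.I) (by simp [abs_of_pos hy0, hy1])).1
    have hu := hbd ((y:ℂ) * Complex.I)
    have hi : ((y:ℂ) * Complex.I).im = y := by simp
    have hn : ‖(y:ℂ) * Complex.I‖ = y := by simp [abs_of_pos hy0]
    rw [hi, abs_of_pos hy0] at hl
    rw [hn] at hu
    have e : Real.exp (π * y) = Real.exp ((π - ε) * y) * Real.exp (ε * y) := by
      rw [← Real.exp_add]; ring_nf
    have h3 := hl.trans hu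
    rw [e] at h3
    have h4 : A * Real.exp (ε * y) ≤ C := by
      have hp := Real.exp_pos ((π - ε) * y)
      refine le_of_mul_le_mul_right ?_ hp
      linarith
    have h5 := Real.add_one_le_exp (ε * y)
    rw [div_lt_iff₀ hA] at hy2
    nlinarith
  · intro k
    refine tendsto_nhds_unique (hft (μ k)) ?_
    refine tendsto_const_nhds.congr' ?_
    filter_upwards [eventually_ge_atTop k.natAbs] with K hK
    by_cases hk : k = 0
    · subst hk; simp [hμ0]
    · rw [Finset.prod_eq_zero (i := k), mul_zero]
      · simp only [Finset.mem_erase, Finset.mem_Icc]; omega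
      · rw [div_self (hne k hk), sub_self]
end

section
/- Define P(z) = z·(1 − z/(iλ_2))·(1 − z/(iλ_{−2}))·∏_{k∈ℤ∖{0,±2}} (1 − z/(iλ_k^+)) · ∏_{k∈ℤ∖{0,±2}} (1 − z/(iλ_k^-)), where the first infinite product is taken as the symmetric limit over 0 < |k| ≤ K, K → ∞ (it converges locally uniformly since iλ_k^+ = −k − i + O(k^{−2})) and the second product converges absolutely (since |λ_k^-| ≍ k²). Then P is an entire function of exponential type at most π, and there exists C > 0 such that: (a) |P(x)| ≤ C (1+|x|)^{−3} e^{√2·π·√|x|} for every x ∈ ℝ; (b) |P'(iλ_k^+)| ≥ C^{−1} |k|^{−3} e^{√2·π·√|k|} for every k ∈ ℤ∖{0,±2}; (c) |P'(iλ_k^-)| ≥ C^{−1} |k|^{−7} e^{π k²} for every k ∈ ℤ∖{0,±2}. -/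
open Real Filter

/-- The hyperbolic eigenvalue branch `λ_k⁺ = (-(k² - 2ik) + √(k⁴ - 4k²))/2`, with the
principal complex square root. -/
noncomputable def lamP (k : ℤ) : ℂ :=
  (-((k:ℂ)^2 - 2*Complex.I*(k:ℂ)) + ((k:ℂ)^4 - 4*(k:ℂ)^2) ^ ((1:ℂ)/2)) / 2

/-- The parabolic eigenvalue branch `λ_k⁻ = (-(k² - 2ik) - √(k⁴ - 4k²))/2`, with the
principal complex square root. -/
noncomputable def lamM (k : ℤ) : ℂ :=
  (-((k:ℂ)^2 - 2*Complex.I*(k:ℂ)) - ((k:ℂ)^4 - 4*(k:ℂ)^2) ^ ((1:ℂ)/2)) / 2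

/-- The symmetric partial products defining the canonical product `P` vanishing at the
points `iλ_k^±`. -/
noncomputable def Ppartial (K : ℕ) (z : ℂ) : ℂ :=
  z * (1 - z / (Complex.I * lamP 2)) * (1 - z / (Complex.I * lamP (-2)))
    * (∏ k ∈ ((Finset.Icc (-(K:ℤ)) (K:ℤ)) \ {0, 2, -2}), (1 - z / (Complex.I * lamP k)))
    * (∏ k ∈ ((Finset.Icc (-(K:ℤ)) (K:ℤ)) \ {0, 2, -2}), (1 - z / (Complex.I * lamM k)))


/-! ### Basic quantities -/

/-- `λ_k⁺ = i k - a_k`. -/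
noncomputable def aa (k : ℕ) : ℂ :=
  ((k:ℂ)^2 - ((k:ℂ)^4 - 4*(k:ℂ)^2) ^ ((1:ℂ)/2)) / 2

/-- `λ_k⁻ = i k - b_k`. -/
noncomputable def bb (k : ℕ) : ℂ :=
  ((k:ℂ)^2 + ((k:ℂ)^4 - 4*(k:ℂ)^2) ^ ((1:ℂ)/2)) / 2

lemma I_lamP (k : ℤ) : Complex.I * lamP k = -(k:ℂ) - Complex.I * aa k.natAbs := by
  have h2 : ((k.natAbs : ℕ) : ℂ)^2 = (k:ℂ)^2 := by
    rw [← Int.cast_natCast (R := ℂ) k.natAbs, ← Int.cast_pow, Int.natAbs_sq, Int.cast_pow]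
  have h4 : ((k.natAbs : ℕ) : ℂ)^4 = (k:ℂ)^4 := by
    rw [show (4:ℕ) = 2*2 by norm_num, pow_mul, pow_mul, h2]
  unfold lamP aa
  rw [h2, h4]
  linear_combination (k:ℂ) * Complex.I_sq

lemma I_lamM (k : ℤ) : Complex.I * lamM k = -(k:ℂ) - Complex.I * bb k.natAbs := by
  have h2 : ((k.natAbs : ℕ) : ℂ)^2 = (k:ℂ)^2 := by
    rw [← Int.cast_natCast (R := ℂ) k.natAbs, ← Int.cast_pow, Int.natAbs_sq, Int.cast_pow]
  have h4 : ((k.natAbs : ℕ) : ℂ)^4 = (k:ℂ)^4 := by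
    rw [show (4:ℕ) = 2*2 by norm_num, pow_mul, pow_mul, h2]
  unfold lamM bb
  rw [h2, h4]
  linear_combination (k:ℂ) * Complex.I_sq

/-- for `k ≥ 2` the numbers are real. -/
lemma real_data (k : ℕ) (hk : 2 ≤ k) : ∃ α β : ℝ, aa k = α ∧ bb k = β ∧ 1 ≤ α ∧ α ≤ 2 ∧ 2 ≤ β ∧
    α + β = (k:ℝ)^2 ∧ α * β = (k:ℝ)^2 := by
  have hk' : (2:ℝ) ≤ k := by exact_mod_cast hk
  have hnn : (0:ℝ) ≤ (k:ℝ)^4 - 4*(k:ℝ)^2 := by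
    have : (k:ℝ)^4 - 4*(k:ℝ)^2 = (k:ℝ)^2 * ((k:ℝ)^2 - 4) := by ring
    rw [this]; exact mul_nonneg (by positivity) (by nlinarith)
  have hs : ((k:ℂ)^4 - 4*(k:ℂ)^2) ^ ((1:ℂ)/2) = ((Real.sqrt ((k:ℝ)^4 - 4*(k:ℝ)^2) : ℝ) : ℂ) := by
    rw [Real.sqrt_eq_rpow, Complex.ofReal_cpow hnn]
    push_cast
    rfl
  set s := Real.sqrt ((k:ℝ)^4 - 4*(k:ℝ)^2) with hsdef
  have hs2 : s^2 = (k:ℝ)^4 - 4*(k:ℝ)^2 := Real.sq_sqrt hnn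
  have hs0 : 0 ≤ s := Real.sqrt_nonneg _
  have h1 : s ≤ (k:ℝ)^2 - 2 := by
    apply abs_le_of_sq_le_sq' _ (by nlinarith) |>.2
    nlinarith
  have h2 : (k:ℝ)^2 - 4 ≤ s := by
    by_contra hcon
    push Not at hcon
    have : s^2 < ((k:ℝ)^2-4)^2 := by
      apply pow_lt_pow_left₀ hcon hs0 (by norm_num)
    nlinarith
  refine ⟨((k:ℝ)^2 - s)/2, ((k:ℝ)^2 + s)/2, ?_, ?_, ?_, ?_, ?_, ?_, ?_⟩
  · unfold aa; rw [hs]; push_cast; ring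
  · unfold bb; rw [hs]; push_cast; ring
  · linarith
  · linarith
  · nlinarith
  · ring
  · nlinarith

lemma sqrt3_cpow : (((1:ℕ):ℂ)^4 - 4*((1:ℕ):ℂ)^2) ^ ((1:ℂ)/2) = Complex.I * (Real.sqrt 3 : ℝ) := by
  have : (((1:ℕ):ℂ)^4 - 4*((1:ℕ):ℂ)^2) = ((-3:ℝ):ℂ) := by push_cast; norm_num
  rw [this, Complex.ofReal_cpow_of_nonpos (by norm_num)]
  have h3 : (-((-3:ℝ):ℂ)) = ((3:ℝ):ℂ) := by push_cast; norm_num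
  rw [h3]
  have : (((3:ℝ):ℂ)) ^ ((1:ℂ)/2) = ((Real.sqrt 3 : ℝ) : ℂ) := by
    rw [Real.sqrt_eq_rpow, Complex.ofReal_cpow (by norm_num)]
    push_cast; rfl
  rw [this]
  have : Complex.exp ((π:ℂ) * Complex.I * (1/2)) = Complex.I := by
    rw [show ((π:ℂ) * Complex.I * (1/2)) = (π:ℂ)/2 * Complex.I by ring]
    exact Complex.exp_pi_div_two_mul_I
  rw [this]; ring

lemma aa_one : aa 1 = 1/2 - Complex.I * ((Real.sqrt 3 / 2 : ℝ):ℂ) := by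
  unfold aa; rw [sqrt3_cpow]; push_cast; ring

lemma bb_one : bb 1 = 1/2 + Complex.I * ((Real.sqrt 3 / 2 : ℝ):ℂ) := by
  unfold bb; rw [sqrt3_cpow]; push_cast; ring

lemma aa_one_re : (aa 1).re = 1/2 := by rw [aa_one]; simp
lemma aa_one_im : (aa 1).im = -(Real.sqrt 3/2) := by rw [aa_one]; simp
lemma bb_one_re : (bb 1).re = 1/2 := by rw [bb_one]; simp
lemma bb_one_im : (bb 1).im = (Real.sqrt 3/2) := by rw [bb_one]; simp

lemma sqrt3_sq : Real.sqrt 3 ^ 2 = 3 := Real.sq_sqrt (by norm_num)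
lemma sqrt3_lb : (1.7:ℝ) ≤ Real.sqrt 3 := Real.le_sqrt_of_sq_le (by norm_num)
lemma sqrt3_ub : Real.sqrt 3 ≤ (1.8:ℝ) := by
  rw [Real.sqrt_le_left (by norm_num)]; norm_num

lemma norm_eq_one_of {z : ℂ} (h : z.re^2 + z.im^2 = 1) : ‖z‖ = 1 := by
  have := Complex.sq_norm z
  rw [Complex.normSq_apply] at this
  have h2 : ‖z‖^2 = 1 := by rw [this]; linarith
  nlinarith [norm_nonneg z]

lemma norm_aa_one : ‖aa 1‖ = 1 := norm_eq_one_of (by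
  rw [aa_one_re, aa_one_im]; linarith [sqrt3_sq])
lemma norm_bb_one : ‖bb 1‖ = 1 := norm_eq_one_of (by
  rw [bb_one_re, bb_one_im]; linarith [sqrt3_sq])
lemma norm_aa_one_sub : ‖aa 1 - 1‖ = 1 := norm_eq_one_of (by
  rw [Complex.sub_re, Complex.sub_im, aa_one_re, aa_one_im]; simp; linarith [sqrt3_sq])
lemma aa_bb_sq_one : 1 + (aa 1)^2 = aa 1 ∧ 1 + (bb 1)^2 = bb 1 := by
  have h : ((Real.sqrt 3 / 2 : ℝ):ℂ)^2 = 3/4 := by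
    rw [← Complex.ofReal_pow, div_pow, sqrt3_sq]; push_cast; norm_num
  rw [aa_one, bb_one]
  constructor
  · linear_combination ((Real.sqrt 3 / 2 : ℝ):ℂ)^2 * Complex.I_sq - h
  · linear_combination ((Real.sqrt 3 / 2 : ℝ):ℂ)^2 * Complex.I_sq - h

lemma one_or_two (k : ℕ) (hk : 1 ≤ k) : k = 1 ∨ 2 ≤ k := by omega

lemma norm_aa_le (k : ℕ) (hk : 1 ≤ k) : ‖aa k‖ ≤ 2 := by
  rcases one_or_two k hk with rfl | h
  · rw [norm_aa_one]; norm_num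
  · obtain ⟨α, β, ha, hb, h1, h2, h3, h4, h5⟩ := real_data k h
    rw [ha, Complex.norm_real, Real.norm_eq_abs, abs_of_nonneg (by linarith)]; exact h2

lemma norm_aa_sub_le (k : ℕ) (hk : 1 ≤ k) : ‖aa k - 1‖ ≤ 4/(k:ℝ)^2 := by
  rcases one_or_two k hk with rfl | h
  · rw [norm_aa_one_sub]; norm_num
  · obtain ⟨α, β, ha, hb, h1, h2, h3, h4, h5⟩ := real_data k h
    rw [ha, ← Complex.ofReal_one, ← Complex.ofReal_sub, Complex.norm_real, Real.norm_eq_abs,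
      abs_of_nonneg (by linarith)]
    have hk0 : (0:ℝ) < (k:ℝ)^2 := by positivity
    rw [le_div_iff₀ hk0]
    nlinarith

lemma den_a_lb (k : ℕ) (hk : 1 ≤ k) : (k:ℝ)^2 ≤ ‖(k:ℂ)^2 + (aa k)^2‖ := by
  rcases one_or_two k hk with rfl | h
  · simp [aa_bb_sq_one.1, norm_aa_one]
  · obtain ⟨α, β, ha, hb, h1, h2, h3, h4, h5⟩ := real_data k h
    rw [ha]
    have : ((k:ℂ)^2 + (α:ℂ)^2) = (((k:ℝ)^2 + α^2 : ℝ) : ℂ) := by push_cast; ring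
    rw [this, Complex.norm_real, Real.norm_eq_abs, abs_of_nonneg (by positivity)]
    nlinarith

lemma den_a_ub (k : ℕ) (hk : 1 ≤ k) : ‖(k:ℂ)^2 + (aa k)^2‖ ≤ (k:ℝ)^2 + 4 := by
  refine (norm_add_le _ _).trans ?_
  rw [norm_pow, norm_pow, Complex.norm_natCast]
  have := norm_aa_le k hk
  nlinarith [norm_nonneg (aa k)]

lemma den_b_lb (k : ℕ) (hk : 1 ≤ k) : (k:ℝ)^4 ≤ ‖(k:ℂ)^2 + (bb k)^2‖ * (1 + 10/(k:ℝ)^2) := by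
  rcases one_or_two k hk with rfl | h
  · simp [aa_bb_sq_one.2, norm_bb_one]
  · obtain ⟨α, β, ha, hb, h1, h2, h3, h4, h5⟩ := real_data k h
    rw [hb]
    have : ((k:ℂ)^2 + (β:ℂ)^2) = (((k:ℝ)^2 + β^2 : ℝ) : ℂ) := by push_cast; ring
    rw [this, Complex.norm_real, Real.norm_eq_abs, abs_of_nonneg (by positivity)]
    have hk' : (2:ℝ) ≤ k := by exact_mod_cast h
    have hk0 : (0:ℝ) < (k:ℝ)^2 := by positivity
    have e : (k:ℝ)^2 + β^2 = (k:ℝ)^4 - (k:ℝ)^2 - α^2 := by nlinarith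
    have e2 : (k:ℝ)^4 = ((k:ℝ)^2)^2 := by ring
    rw [e, e2]
    have hX : (4:ℝ) ≤ (k:ℝ)^2 := by nlinarith
    generalize (k:ℝ)^2 = X at *
    have : (X^2 - X - α^2) * (1+10/X) - X^2 = (9*X^2 - (10+α^2)*X - 10*α^2)/X := by
      field_simp; ring
    have h6 : 0 ≤ (9*X^2 - (10+α^2)*X - 10*α^2)/X := by
      apply div_nonneg _ hk0.le
      have : α^2 ≤ 4 := by nlinarith
      nlinarith
    linarith

lemma den_b_ub (k : ℕ) (hk : 1 ≤ k) : ‖(k:ℂ)^2 + (bb k)^2‖ ≤ (k:ℝ)^4 := by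
  rcases one_or_two k hk with rfl | h
  · simp [aa_bb_sq_one.2, norm_bb_one]
  · obtain ⟨α, β, ha, hb, h1, h2, h3, h4, h5⟩ := real_data k h
    rw [hb]
    have : ((k:ℂ)^2 + (β:ℂ)^2) = (((k:ℝ)^2 + β^2 : ℝ) : ℂ) := by push_cast; ring
    rw [this, Complex.norm_real, Real.norm_eq_abs, abs_of_nonneg (by positivity)]
    have e : (k:ℝ)^2 + β^2 = (k:ℝ)^4 - (k:ℝ)^2 - α^2 := by nlinarith
    nlinarith [sq_nonneg α, sq_nonneg (k:ℝ)]

lemma den_a_ne (k : ℕ) (hk : 1 ≤ k) : (k:ℂ)^2 + (aa k)^2 ≠ 0 := by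
  have := den_a_lb k hk
  intro h
  rw [h, norm_zero] at this
  have : (0:ℝ) < (k:ℝ)^2 := by positivity
  linarith

lemma den_b_ne (k : ℕ) (hk : 1 ≤ k) : (k:ℂ)^2 + (bb k)^2 ≠ 0 := by
  have := den_b_lb k hk
  intro h
  rw [h, norm_zero] at this
  have : (0:ℝ) < (k:ℝ)^4 := by positivity
  linarith

/-- paired factor with general parameter -/
noncomputable def FF (k : ℕ) (c z : ℂ) : ℂ := 1 - (z^2 + 2*Complex.I*c*z) / ((k:ℂ)^2 + c^2)

noncomputable def Fp (k : ℕ) (z : ℂ) : ℂ := FF k (aa k) z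
noncomputable def Fm (k : ℕ) (z : ℂ) : ℂ := FF k (bb k) z
noncomputable def Gm (k : ℕ) (z : ℂ) : ℂ := if k = 2 then 1 else Fm k z

lemma FF_eq (k : ℕ) (c z : ℂ) (h : (k:ℂ)^2 + c^2 ≠ 0) :
    FF k c z = ((k:ℂ) - (z + Complex.I*c)) * ((k:ℂ) + (z + Complex.I*c)) / ((k:ℂ)^2 + c^2) := by
  unfold FF
  rw [eq_div_iff h, sub_mul, div_mul_cancel₀ _ h]
  linear_combination (c^2) * Complex.I_sq

lemma norm_FF (k : ℕ) (c z : ℂ) (h : (k:ℂ)^2 + c^2 ≠ 0) :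
    ‖FF k c z‖ = ‖(k:ℂ) - (z + Complex.I*c)‖ * ‖(k:ℂ) + (z + Complex.I*c)‖ / ‖(k:ℂ)^2 + c^2‖ := by
  rw [FF_eq k c z h, norm_div, norm_mul]

lemma pair_eq (k : ℕ) (c z : ℂ) (h : (k:ℂ)^2 + c^2 ≠ 0) :
    (1 - z / (-(k:ℂ) - Complex.I * c)) * (1 - z / ((k:ℂ) - Complex.I * c)) = FF k c z := by
  have e : (-(k:ℂ) - Complex.I * c) * ((k:ℂ) - Complex.I * c) = -((k:ℂ)^2 + c^2) := by
    linear_combination c^2 * Complex.I_sq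
  have h' : (-(k:ℂ) - Complex.I * c) * ((k:ℂ) - Complex.I * c) ≠ 0 := by
    rw [e]; exact neg_ne_zero.mpr h
  have h1 := left_ne_zero_of_mul h'
  have h2 := right_ne_zero_of_mul h'
  rw [FF_eq k c z h, one_sub_div h1, one_sub_div h2, div_mul_div_comm, e,
    div_eq_div_iff (neg_ne_zero.mpr h) h]
  ring

lemma pairP (m : ℕ) (z : ℂ) :
    (1 - z / (Complex.I * lamP ((m:ℤ)+1))) * (1 - z / (Complex.I * lamP (-((m:ℤ)+1)))) = Fp (m+1) z := by
  rw [I_lamP, I_lamP]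
  have h1 : ((m:ℤ)+1).natAbs = m+1 := by omega
  have h2 : (-((m:ℤ)+1)).natAbs = m+1 := by omega
  rw [h1, h2, Fp, ← pair_eq (m+1) _ z (den_a_ne (m+1) (by omega))]
  push_cast
  rw [neg_neg]

lemma pairM (m : ℕ) (z : ℂ) :
    (1 - z / (Complex.I * lamM ((m:ℤ)+1))) * (1 - z / (Complex.I * lamM (-((m:ℤ)+1)))) = Fm (m+1) z := by
  rw [I_lamM, I_lamM]
  have h1 : ((m:ℤ)+1).natAbs = m+1 := by omega
  have h2 : (-((m:ℤ)+1)).natAbs = m+1 := by omega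
  rw [h1, h2, Fm, ← pair_eq (m+1) _ z (den_b_ne (m+1) (by omega))]
  push_cast
  rw [neg_neg]

lemma prod_sym (f : ℤ → ℂ) (K : ℕ) :
    ∏ k ∈ ((Finset.Icc (-(K:ℤ)) (K:ℤ)) \ {0, 2, -2}), f k
      = ∏ m ∈ Finset.range K, (if m + 1 = 2 then 1 else f ((m:ℤ)+1) * f (-((m:ℤ)+1))) := by
  induction K with
  | zero =>
    simp only [Finset.range_zero, Finset.prod_empty]
    apply Finset.prod_eq_one
    intro x hx
    simp at hx
    omega
  | succ K ih =>
    rw [Finset.prod_range_succ, ← ih]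
    split_ifs with h
    · have hK : K = 1 := by omega
      subst hK
      rw [mul_one]
      apply Finset.prod_congr _ (fun _ _ => rfl)
      decide
    · have : ((Finset.Icc (-((K+1:ℕ):ℤ)) ((K+1:ℕ):ℤ)) \ {0, 2, -2})
        = insert ((K:ℤ)+1) (insert (-((K:ℤ)+1)) ((Finset.Icc (-(K:ℤ)) (K:ℤ)) \ {0, 2, -2})) := by
        ext x
        simp only [Finset.mem_sdiff, Finset.mem_Icc, Finset.mem_insert, Finset.mem_singleton]
        push_cast
        omega
      rw [this, Finset.prod_insert, Finset.prod_insert]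
      · ring
      · simp only [Finset.mem_sdiff, Finset.mem_Icc]; omega
      · simp only [Finset.mem_insert, Finset.mem_sdiff, Finset.mem_Icc]; omega

lemma Ppartial_eq (K : ℕ) (hK : 2 ≤ K) (z : ℂ) :
    Ppartial K z = z * (∏ m ∈ Finset.range K, Fp (m+1) z) * (∏ m ∈ Finset.range K, Gm (m+1) z) := by
  unfold Ppartial
  rw [prod_sym, prod_sym]
  simp only [pairP, pairM]
  have h1 : ∀ m, (if m + 1 = 2 then 1 else Fm (m+1) z) = Gm (m+1) z := fun m => rfl
  simp only [h1]
  have hmem : 1 ∈ Finset.range K := by simp; omega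
  rw [← Finset.mul_prod_erase _ _ hmem, ← Finset.mul_prod_erase (Finset.range K) (fun m => Fp (m+1) z) hmem]
  have h2 : (1 - z / (Complex.I * lamP 2)) * (1 - z / (Complex.I * lamP (-2))) = Fp (1+1) z := by
    rw [← pairP]; norm_num
  have h3 : ∏ x ∈ (Finset.range K).erase 1, (if x + 1 = 2 then 1 else Fp (x+1) z)
     = ∏ x ∈ (Finset.range K).erase 1, Fp (x+1) z := by
    apply Finset.prod_congr rfl
    intro x hx
    rw [if_neg]
    have := (Finset.mem_erase.mp hx).1
    omega
  rw [h3, ← h2]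
  simp
  left
  ring

/-! ### Product tools -/

lemma sum_inv_sq_le (N : ℕ) : ∑ m ∈ Finset.range N, 1/((m:ℝ)+1)^2 ≤ 2 := by
  have : ∀ N : ℕ, ∑ m ∈ Finset.range N, 1/((m:ℝ)+1)^2 ≤ 2 - 2/((N:ℝ)+1) := by
    intro N
    induction N with
    | zero => norm_num
    | succ n ih =>
      rw [Finset.sum_range_succ]
      have hn : (0:ℝ) ≤ n := Nat.cast_nonneg n
      have : 1/((n:ℝ)+1)^2 ≤ 2/((n:ℝ)+1) - 2/(((n+1:ℕ):ℝ)+1) := by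
        push_cast
        rw [div_sub_div _ _ (by positivity) (by positivity), div_le_div_iff₀ (by positivity) (by positivity)]
        nlinarith [pow_nonneg hn 2, pow_nonneg hn 3]
      linarith
  have h := this N
  have : (0:ℝ) ≤ 2/((N:ℝ)+1) := by positivity
  linarith

/-- comparison of products up to a constant -/
lemma prod_compare_finset (C : ℝ) (hC : 0 ≤ C) (f g : ℕ → ℝ) (N : ℕ) (s : Finset ℕ) (hs : s ⊆ Finset.range N)
    (hf : ∀ m ∈ s, 0 ≤ f m)
    (h : ∀ m ∈ s, f m ≤ (1 + C/((m:ℝ)+1)^2) * g m) :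
    ∏ m ∈ s, f m ≤ Real.exp (4*C) * ∏ m ∈ s, g m := by
  have hpos : ∀ m : ℕ, 0 < (1 + C/((m:ℝ)+1)^2) := fun m => by positivity
  have hg : ∀ m ∈ s, 0 ≤ g m := by
    intro m hm
    by_contra hcon
    push Not at hcon
    have := mul_neg_of_pos_of_neg (hpos m) hcon
    linarith [hf m hm, h m hm]
  refine (Finset.prod_le_prod hf h).trans ?_
  rw [Finset.prod_mul_distrib]
  apply mul_le_mul_of_nonneg_right _ (Finset.prod_nonneg hg)
  calc ∏ m ∈ s, (1 + C/((m:ℝ)+1)^2) ≤ ∏ m ∈ s, Real.exp (C/((m:ℝ)+1)^2) := by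
        apply Finset.prod_le_prod (fun m _ => (hpos m).le)
        intro m _
        linarith [Real.add_one_le_exp (C/((m:ℝ)+1)^2)]
    _ = Real.exp (∑ m ∈ s, C/((m:ℝ)+1)^2) := (Real.exp_sum _ _).symm
    _ ≤ Real.exp (4*C) := by
        apply Real.exp_le_exp.mpr
        calc ∑ m ∈ s, C/((m:ℝ)+1)^2 ≤ ∑ m ∈ Finset.range N, C/((m:ℝ)+1)^2 :=
              Finset.sum_le_sum_of_subset_of_nonneg hs (fun m _ _ => by positivity)
          _ = C * ∑ m ∈ Finset.range N, 1/((m:ℝ)+1)^2 := by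
              rw [Finset.mul_sum]; apply Finset.sum_congr rfl; intro m _; ring
          _ ≤ C * 2 := mul_le_mul_of_nonneg_left (sum_inv_sq_le N) hC
          _ ≤ 4*C := by linarith

lemma norm_sin_ub (z : ℂ) : ‖Complex.sin z‖ ≤ Real.exp |z.im| := by
  rw [Complex.sin, norm_div, norm_mul, Complex.norm_I, mul_one]
  have h1 : ‖Complex.exp (-z * Complex.I)‖ ≤ Real.exp |z.im| := by
    rw [Complex.norm_exp]; simp; exact le_abs_self _
  have h2 : ‖Complex.exp (z * Complex.I)‖ ≤ Real.exp |z.im| := by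
    rw [Complex.norm_exp]; simp; exact neg_le_abs _
  have h3 := norm_sub_le (Complex.exp (-z * Complex.I)) (Complex.exp (z * Complex.I))
  have : ‖(2:ℂ)‖ = 2 := by simp
  rw [this]
  linarith

lemma norm_sin_lb (z : ℂ) : (Real.exp |z.im| - Real.exp (-|z.im|))/2 ≤ ‖Complex.sin z‖ := by
  rw [Complex.sin, norm_div, norm_mul, Complex.norm_I, mul_one]
  have h1 : ‖Complex.exp (-z * Complex.I)‖ = Real.exp z.im := by
    rw [Complex.norm_exp]; simp
  have h2 : ‖Complex.exp (z * Complex.I)‖ = Real.exp (-z.im) := by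
    rw [Complex.norm_exp]; simp
  have h3 := abs_norm_sub_norm_le (Complex.exp (-z * Complex.I)) (Complex.exp (z * Complex.I))
  rw [h1, h2] at h3
  have : ‖(2:ℂ)‖ = 2 := by simp
  rw [this]
  apply div_le_div_of_nonneg_right _ (by norm_num)
  refine le_trans ?_ h3
  rcases abs_cases z.im with ⟨h, _⟩ | ⟨h, _⟩ <;> rw [h]
  · exact le_abs_self _
  · rw [neg_neg]; exact (le_of_eq (by ring)).trans (neg_le_abs _)

lemma euler_norm (z : ℂ) (hz : z ≠ 0) :
    Tendsto (fun N : ℕ => ∏ m ∈ Finset.range N, ‖1 - z^2/((m:ℂ)+1)^2‖) atTop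
      (nhds (‖Complex.sin (π * z)‖ / (π * ‖z‖))) := by
  have h := (Complex.tendsto_euler_sin_prod z).norm
  have h2 := h.div_const (π * ‖z‖)
  refine h2.congr ?_
  intro N
  have : ‖(π:ℂ)‖ = π := by rw [Complex.norm_real, Real.norm_eq_abs, abs_of_pos Real.pi_pos]
  rw [norm_mul, norm_mul, this, norm_prod]
  have hz' : ‖z‖ ≠ 0 := norm_ne_zero_iff.mpr hz
  have := Real.pi_pos
  field_simp

lemma prod_sinh_le (y : ℝ) (hy : 0 ≤ y) (N : ℕ) :
    ∏ m ∈ Finset.range N, (1 + y^2/((m:ℝ)+1)^2) ≤ Real.exp (π * y) := by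
  rcases hy.eq_or_lt with rfl | hy
  · simp
  have hne : (Complex.I * (y:ℂ)) ≠ 0 := by
    simp [hy.ne']
  have h := euler_norm _ hne
  have e : ∀ m : ℕ, ‖1 - (Complex.I * (y:ℂ))^2/((m:ℂ)+1)^2‖ = 1 + y^2/((m:ℝ)+1)^2 := by
    intro m
    have : 1 - (Complex.I * (y:ℂ))^2/((m:ℂ)+1)^2 = ((1 + y^2/((m:ℝ)+1)^2 : ℝ) : ℂ) := by
      rw [mul_pow, Complex.I_sq]; push_cast; ring
    rw [this, Complex.norm_real, Real.norm_eq_abs, abs_of_nonneg (by positivity)]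
  simp only [e] at h
  have hmono : Monotone (fun N : ℕ => ∏ m ∈ Finset.range N, (1 + y^2/((m:ℝ)+1)^2)) := by
    apply monotone_nat_of_le_succ
    intro n
    rw [Finset.prod_range_succ]
    apply le_mul_of_one_le_right
    · apply Finset.prod_nonneg; intro i _; positivity
    · have : 0 ≤ y^2/((n:ℝ)+1)^2 := by positivity
      linarith
  refine (hmono.ge_of_tendsto h N).trans ?_
  have hs : Complex.sin (π * (Complex.I * y)) = (Real.sinh (π*y) : ℝ) * Complex.I := by
    rw [Complex.ofReal_sinh, show (π:ℂ) * (Complex.I * y) = ((π * y : ℝ):ℂ) * Complex.I by push_cast; ring,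
      Complex.sin_mul_I]
  have ht : 0 < π * y := mul_pos Real.pi_pos hy
  rw [hs, norm_mul, Complex.norm_I, mul_one, Complex.norm_real, norm_mul, Complex.norm_I, one_mul,
    Complex.norm_real, Real.norm_eq_abs, Real.norm_eq_abs, abs_of_pos hy,
    abs_of_nonneg (Real.sinh_nonneg_iff.mpr ht.le), div_le_iff₀ ht, Real.sinh_eq]
  generalize π * y = t at *
  have h1 : Real.exp (-t) = Real.exp t * Real.exp (-2*t) := by rw [← Real.exp_add]; ring_nf
  have h2 := Real.add_one_le_exp (-2*t)
  rw [h1]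
  nlinarith [Real.exp_pos t]

/-- the root of `i r` -/
noncomputable def rt (r : ℝ) : ℂ := (Real.sqrt (r/2) : ℝ) * (1 + Complex.I)

lemma rt_sq (r : ℝ) (hr : 0 ≤ r) : (rt r)^2 = Complex.I * r := by
  unfold rt
  rw [mul_pow, ← Complex.ofReal_pow, Real.sq_sqrt (by positivity)]
  push_cast
  linear_combination (r/2 : ℂ) * Complex.I_sq

lemma rt_norm (r : ℝ) (hr : 0 ≤ r) : ‖rt r‖^2 = r := by
  rw [← norm_pow, rt_sq r hr, norm_mul, Complex.norm_I, one_mul, Complex.norm_real,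
    Real.norm_eq_abs, abs_of_nonneg hr]

lemma rt_im (r : ℝ) : (π * rt r).im = π * Real.sqrt (r/2) := by
  unfold rt
  simp

lemma sqrt_id (r : ℝ) : Real.sqrt 2 * π * Real.sqrt r = 2 * (π * Real.sqrt (r/2)) := by
  rw [Real.sqrt_div' _ (by norm_num)]
  have h : Real.sqrt 2 ^ 2 = 2 := Real.sq_sqrt (by norm_num)
  have h0 : Real.sqrt 2 ≠ 0 := by positivity
  field_simp
  linear_combination (Real.sqrt r) * h

/-- limit of the comparison product, all factors -/
lemma quartic_tendsto (r : ℝ) (hr : 0 < r) :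
    Tendsto (fun N : ℕ => ∏ m ∈ Finset.range N, (1 + r^2/((m:ℝ)+1)^4)) atTop
      (nhds (‖Complex.sin (π * rt r)‖^2 / (π^2 * r))) := by
  have hne : rt r ≠ 0 := by
    intro h
    have := rt_norm r hr.le
    rw [h] at this
    simp at this
    exact hr.ne this
  have h := (euler_norm _ hne).pow 2
  have e : (‖Complex.sin (π * rt r)‖ / (π * ‖rt r‖))^2 = ‖Complex.sin (π * rt r)‖^2 / (π^2 * r) := by
    rw [div_pow, mul_pow, rt_norm r hr.le]
  rw [e] at h
  refine h.congr ?_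
  intro N
  rw [← Finset.prod_pow]
  apply Finset.prod_congr rfl
  intro m _
  rw [rt_sq r hr.le, Complex.sq_norm]
  have : 1 - Complex.I * r/((m:ℂ)+1)^2 = ((1:ℝ):ℂ) + ((-(r/((m:ℝ)+1)^2) : ℝ):ℂ) * Complex.I := by
    push_cast; ring
  rw [this, Complex.normSq_add_mul_I]
  field_simp

/-- comparison factor, with `k = 2` removed -/
noncomputable def qf (r : ℝ) (m : ℕ) : ℝ := if m + 1 = 2 then 1 else 1 + r^2/((m:ℝ)+1)^4

lemma qf_tendsto (r : ℝ) (hr : 0 < r) :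
    Tendsto (fun N : ℕ => ∏ m ∈ Finset.range N, qf r m) atTop
      (nhds (‖Complex.sin (π * rt r)‖^2 / (π^2 * r) / (1 + r^2/16))) := by
  refine ((quartic_tendsto r hr).div_const (1 + r^2/16)).congr' ?_
  filter_upwards [eventually_ge_atTop 2] with N hN
  have hmem : 1 ∈ Finset.range N := by simp; omega
  have h0 : (1 + r^2/16) ≠ 0 := by positivity
  rw [← Finset.mul_prod_erase _ _ hmem, ← Finset.mul_prod_erase _ (qf r) hmem]
  have h1 : qf r 1 = 1 := by simp [qf]
  have h2 : (1 + r^2/(((1:ℕ):ℝ)+1)^4) = 1 + r^2/16 := by norm_num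
  rw [h1, h2, one_mul, mul_div_assoc, mul_comm, div_mul_cancel₀ _ h0]
  apply Finset.prod_congr rfl
  intro m hm
  have := (Finset.mem_erase.mp hm).1
  rw [qf, if_neg (by omega)]

/-! ### the factorial product -/

lemma prod_base (j : ℕ) : ∏ m ∈ Finset.range j, (|((m:ℝ)+1)^2 - ((j:ℝ)+1)^2| / ((m:ℝ)+1)^2)
    = ((2*(j+1)).factorial : ℝ) / (2 * ((j+1).factorial:ℝ)^2) := by
  have h1 : ∏ m ∈ Finset.range j, |((m:ℝ)+1)^2 - ((j:ℝ)+1)^2|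
      = (∏ m ∈ Finset.range j, ((j - m : ℕ):ℝ)) * (∏ m ∈ Finset.range j, ((j + 2 + m : ℕ):ℝ)) := by
    rw [← Finset.prod_mul_distrib]
    apply Finset.prod_congr rfl
    intro m hm
    have hm' : m < j := Finset.mem_range.mp hm
    have : (m:ℝ) < j := by exact_mod_cast hm'
    rw [Nat.cast_sub hm'.le]
    push_cast
    rw [abs_of_nonpos (by nlinarith [Nat.cast_nonneg (α := ℝ) m])]
    ring
  rw [Finset.prod_div_distrib, h1, Finset.prod_pow, ← Nat.cast_prod, ← Nat.cast_prod]
  have h2 : ∏ m ∈ Finset.range j, (j - m) = j.factorial := by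
    rw [← Nat.descFactorial_eq_prod_range, Nat.descFactorial_self]
  have h3 : ∏ m ∈ Finset.range j, (j + 2 + m) = (j+1+1).ascFactorial j := by
    rw [Nat.ascFactorial_eq_prod_range]
  have h4 : ∏ m ∈ Finset.range j, ((m:ℝ)+1) = (j.factorial : ℝ) := by
    rw [← Finset.prod_range_add_one_eq_factorial]; push_cast; rfl
  have h5 := Nat.factorial_mul_ascFactorial (j+1) j
  have h6 : (2*(j+1)).factorial = (2*(j+1)) * (j+1+j).factorial := by
    rw [show 2*(j+1) = (j+1+j)+1 by ring, Nat.factorial_succ]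
  have h7 : (j+1).factorial = (j+1) * j.factorial := Nat.factorial_succ j
  rw [h2, h3, h4, h6, ← h5, h7]
  have : (j.factorial:ℝ) ≠ 0 := by positivity
  have : (j:ℝ)+1 ≠ 0 := by positivity
  push_cast
  field_simp

lemma prod_formula (j d : ℕ) : ∏ m ∈ (Finset.range (j+1+d)).erase j,
      (|((m:ℝ)+1)^2 - ((j:ℝ)+1)^2| / ((m:ℝ)+1)^2)
    = (d.factorial : ℝ) * ((2*(j+1)+d).factorial : ℝ) / (2 * ((j+1+d).factorial:ℝ)^2) := by
  induction d with
  | zero =>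
    have : (Finset.range (j+1+0)).erase j = Finset.range j := by
      ext x; simp; omega
    rw [this, prod_base]; simp
  | succ d ih =>
    have : (Finset.range (j+1+(d+1))).erase j = insert (j+1+d) ((Finset.range (j+1+d)).erase j) := by
      ext x; simp; omega
    rw [this, Finset.prod_insert (by simp), ih]
    have e1 : (2*(j+1)+(d+1)).factorial = (2*(j+1)+d+1) * (2*(j+1)+d).factorial := Nat.factorial_succ _
    have e2 : (j+1+(d+1)).factorial = (j+1+d+1) * (j+1+d).factorial := Nat.factorial_succ _
    rw [e1, e2, Nat.factorial_succ d]
    push_cast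
    rw [abs_of_nonneg (by nlinarith [Nat.cast_nonneg (α := ℝ) j, Nat.cast_nonneg (α := ℝ) d])]
    have : ((j+1+d).factorial:ℝ) ≠ 0 := by positivity
    have : (j:ℝ)+1+d+1 ≠ 0 := by positivity
    field_simp
    ring

lemma fact_ineq (n d : ℕ) : ((n+d).factorial)^2 ≤ d.factorial * (2*n+d).factorial := by
  induction n with
  | zero => simp [sq]
  | succ n ih =>
    rw [show n+1+d = (n+d)+1 by ring, show 2*(n+1)+d = (2*n+d+1)+1 by ring, Nat.factorial_succ,
      Nat.factorial_succ, Nat.factorial_succ, mul_pow]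
    calc (n+d+1)^2 * ((n+d).factorial)^2 ≤ (n+d+1)^2 * (d.factorial * (2*n+d).factorial) :=
          Nat.mul_le_mul_left _ ih
      _ ≤ ((2*n+d+1+1) * (2*n+d+1)) * (d.factorial * (2*n+d).factorial) := by
          apply Nat.mul_le_mul_right
          nlinarith
      _ = _ := by ring

lemma prod_erase_lb (j N : ℕ) (h : j < N) : (1/2:ℝ) ≤ ∏ m ∈ (Finset.range N).erase j,
      (|((m:ℝ)+1)^2 - ((j:ℝ)+1)^2| / ((m:ℝ)+1)^2) := by
  obtain ⟨d, rfl⟩ : ∃ d, N = j+1+d := ⟨N - (j+1), by omega⟩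
  rw [prod_formula, div_le_div_iff₀ (by norm_num) (by positivity)]
  have := fact_ineq (j+1) d
  have h' : (((j+1+d).factorial:ℝ))^2 ≤ (d.factorial:ℝ) * ((2*(j+1)+d).factorial:ℝ) := by
    exact_mod_cast this
  linarith

/-! ### Convergence -/

lemma Fp_sub_one_le (k : ℕ) (hk : 1 ≤ k) (z : ℂ) :
    ‖Fp k z - 1‖ ≤ (‖z‖^2 + 4*‖z‖)/(k:ℝ)^2 := by
  have h : Fp k z - 1 = -((z^2 + 2*Complex.I*(aa k)*z) / ((k:ℂ)^2 + (aa k)^2)) := by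
    unfold Fp FF; ring
  have hk0 : (0:ℝ) < (k:ℝ)^2 := by positivity
  rw [h, norm_neg, norm_div]
  apply div_le_div₀ (by positivity) _ hk0 (den_a_lb k hk)
  refine (norm_add_le _ _).trans ?_
  rw [norm_mul, norm_mul, norm_mul, norm_pow, Complex.norm_I]
  have := norm_aa_le k hk
  have h2 : ‖(2:ℂ)‖ = 2 := by simp
  rw [h2]
  nlinarith [norm_nonneg z]

lemma norm_bb_le (k : ℕ) (hk : 1 ≤ k) : ‖bb k‖ ≤ (k:ℝ)^2 := by
  rcases one_or_two k hk with rfl | h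
  · rw [norm_bb_one]; norm_num
  · obtain ⟨α, β, ha, hb, h1, h2, h3, h4, h5⟩ := real_data k h
    rw [hb, Complex.norm_real, Real.norm_eq_abs, abs_of_nonneg (by linarith)]; linarith

lemma Fm_sub_one_le (k : ℕ) (hk : 1 ≤ k) (z : ℂ) :
    ‖Fm k z - 1‖ ≤ (11*(‖z‖^2 + 2*‖z‖))/(k:ℝ)^2 := by
  have h : Fm k z - 1 = -((z^2 + 2*Complex.I*(bb k)*z) / ((k:ℂ)^2 + (bb k)^2)) := by
    unfold Fm FF; ring
  have hk1 : (1:ℝ) ≤ (k:ℝ)^2 := by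
    have : (1:ℝ) ≤ k := by exact_mod_cast hk
    nlinarith
  have hk0 : (0:ℝ) < (k:ℝ)^2 := by positivity
  have hd : 0 < ‖(k:ℂ)^2 + (bb k)^2‖ := norm_pos_iff.mpr (den_b_ne k hk)
  have hd2 : (k:ℝ)^4 ≤ ‖(k:ℂ)^2 + (bb k)^2‖ * 11 := by
    refine (den_b_lb k hk).trans ?_
    apply mul_le_mul_of_nonneg_left _ hd.le
    have : 10/(k:ℝ)^2 ≤ 10 := by
      rw [div_le_iff₀ hk0]; linarith
    linarith
  rw [h, norm_neg, norm_div, div_le_div_iff₀ hd hk0]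
  have hn : ‖z^2 + 2*Complex.I*(bb k)*z‖ ≤ (‖z‖^2 + 2*‖z‖) * (k:ℝ)^2 := by
    refine (norm_add_le _ _).trans ?_
    rw [norm_mul, norm_mul, norm_mul, norm_pow, Complex.norm_I]
    have := norm_bb_le k hk
    have h2 : ‖(2:ℂ)‖ = 2 := by simp
    rw [h2]
    nlinarith [norm_nonneg z, mul_le_mul_of_nonneg_left this (norm_nonneg z), sq_nonneg ‖z‖,
      mul_le_mul_of_nonneg_left hk1 (sq_nonneg ‖z‖)]
  have h0 : 0 ≤ ‖z‖^2 + 2*‖z‖ := by positivity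
  calc ‖z^2 + 2*Complex.I*(bb k)*z‖ * (k:ℝ)^2 ≤ (‖z‖^2 + 2*‖z‖) * (k:ℝ)^2 * (k:ℝ)^2 :=
        mul_le_mul_of_nonneg_right hn hk0.le
    _ = (‖z‖^2 + 2*‖z‖) * (k:ℝ)^4 := by ring
    _ ≤ (‖z‖^2 + 2*‖z‖) * (‖(k:ℂ)^2 + (bb k)^2‖ * 11) := mul_le_mul_of_nonneg_left hd2 h0
    _ = _ := by ring

lemma Gm_sub_one_le (k : ℕ) (hk : 1 ≤ k) (z : ℂ) :
    ‖Gm k z - 1‖ ≤ (11*(‖z‖^2 + 2*‖z‖))/(k:ℝ)^2 := by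
  unfold Gm
  split_ifs
  · simp; positivity
  · exact Fm_sub_one_le k hk z

lemma Fp_diff (k : ℕ) : Differentiable ℂ (Fp k) := by
  unfold Fp FF; fun_prop

lemma Fm_diff (k : ℕ) : Differentiable ℂ (Fm k) := by
  unfold Fm FF; fun_prop

lemma Gm_diff (k : ℕ) : Differentiable ℂ (Gm k) := by
  unfold Gm
  split_ifs
  · fun_prop
  · exact Fm_diff k

lemma summable_inv_sq : Summable (fun m : ℕ => 1/((m:ℝ)+1)^2) := by
  have := (summable_nat_add_iff (f := fun m : ℕ => 1/((m:ℝ))^2) 1).mpr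
    (Real.summable_one_div_nat_pow.mpr (by norm_num))
  simpa using this

lemma tlu_aux (h : ℕ → ℂ → ℂ) (hc : ∀ m, Continuous (h m)) (A : ℝ)
    (hA : ∀ m z, ‖h m z - 1‖ ≤ A * (‖z‖^2 + 4*‖z‖)/((m:ℝ)+1)^2) :
    ∃ g : ℂ → ℂ, TendstoLocallyUniformly (fun N z => ∏ m ∈ Finset.range N, h m z) g atTop := by
  refine ⟨fun z => ∏' m, (1 + (h m z - 1)), ?_⟩
  have key : HasProdLocallyUniformly (fun m z => 1 + (h m z - 1)) (fun z => ∏' m, (1 + (h m z - 1))) := by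
    apply hasProdLocallyUniformly_of_forall_compact
    intro K hK
    obtain ⟨R, hR⟩ := hK.isBounded.exists_norm_le
    have hA0 : 0 ≤ A := by
      have := (norm_nonneg _).trans (hA 0 1)
      norm_num at this
      linarith
    apply Summable.hasProdUniformlyOn_nat_one_add hK
      (u := fun m => (A * (R^2 + 4*R)) * (1/((m:ℝ)+1)^2))
    · exact summable_inv_sq.mul_left _
    · refine Eventually.of_forall fun m z hz => (hA m z).trans ?_
      rw [mul_one_div]
      have hz' := hR z hz
      have := norm_nonneg z
      gcongr
    · intro m
      exact ((hc m).sub continuous_const).continuousOn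
  have := key.tendstoLocallyUniformly_finsetRange
  simpa only [add_sub_cancel] using this

lemma Ppartial_diff (N : ℕ) : Differentiable ℂ (Ppartial N) := by
  unfold Ppartial; fun_prop

lemma exists_P : ∃ P : ℂ → ℂ, TendstoLocallyUniformly Ppartial P atTop ∧ Differentiable ℂ P ∧
    (∀ z, Tendsto (fun N => Ppartial N z) atTop (nhds (P z))) ∧
    (∀ z, Tendsto (fun N => deriv (Ppartial N) z) atTop (nhds (deriv P z))) := by
  obtain ⟨g1, h1⟩ := tlu_aux (fun m => Fp (m+1)) (fun m => (Fp_diff _).continuous) 1 (by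
    intro m z
    have := Fp_sub_one_le (m+1) (by omega) z
    push_cast at this
    simpa using this)
  obtain ⟨g2, h2⟩ := tlu_aux (fun m => Gm (m+1)) (fun m => (Gm_diff _).continuous) 11 (by
    intro m z
    have := Gm_sub_one_le (m+1) (by omega) z
    push_cast at this
    refine this.trans ?_
    have := norm_nonneg z
    gcongr
    norm_num)
  have c1 : Continuous g1 := h1.continuous (Frequently.of_forall fun N => by
    exact continuous_finsetProd _ (fun m _ => (Fp_diff _).continuous))
  have c2 : Continuous g2 := h2.continuous (Frequently.of_forall fun N => by
    exact continuous_finsetProd _ (fun m _ => (Gm_diff _).continuous))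
  have h0 : TendstoLocallyUniformly (fun (_:ℕ) (z:ℂ) => z) (fun z => z) atTop := by
    intro u hu x
    exact ⟨Set.univ, Filter.univ_mem, Eventually.of_forall fun n y _ => refl_mem_uniformity hu⟩
  have h3 := (h0.mul₀ h1 continuous_id c1).mul₀ h2 (continuous_id.mul c1) c2
  have h4 : TendstoLocallyUniformly Ppartial (fun z => z * g1 z * g2 z) atTop := by
    intro u hu x
    obtain ⟨t, ht, H⟩ := h3 u hu x
    refine ⟨t, ht, ?_⟩
    filter_upwards [H, eventually_ge_atTop 2] with N hN h2N y hy
    rw [Ppartial_eq N h2N]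
    exact hN y hy
  have h5 := tendstoLocallyUniformlyOn_univ.mpr h4
  have hd : ∀ᶠ N in atTop, DifferentiableOn ℂ (Ppartial N) Set.univ :=
    Eventually.of_forall fun N => (Ppartial_diff N).differentiableOn
  refine ⟨_, h4, ?_, ?_, ?_⟩
  · exact differentiableOn_univ.mp (h5.differentiableOn hd isOpen_univ)
  · intro z
    exact h5.tendsto_at (Set.mem_univ z)
  · intro z
    exact (h5.deriv hd isOpen_univ).tendsto_at (Set.mem_univ z)

/-! ### Exponential type -/

lemma Fp_type (k : ℕ) (hk : 1 ≤ k) (z : ℂ) : ‖Fp k z‖ ≤ 1 + (‖z‖+2)^2/(k:ℝ)^2 := by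
  have h1 := Fp_sub_one_le k hk z
  have h2 : ‖Fp k z‖ ≤ 1 + ‖Fp k z - 1‖ := by
    have := norm_add_le (1:ℂ) (Fp k z - 1)
    simpa using this
  have h3 : (‖z‖^2 + 4*‖z‖)/(k:ℝ)^2 ≤ (‖z‖+2)^2/(k:ℝ)^2 := by
    gcongr; nlinarith
  linarith

lemma Fm_type (k : ℕ) (hk : 1 ≤ k) (z : ℂ) : ‖Fm k z‖ ≤ (1 + 2*‖z‖/(k:ℝ)^2)^2 := by
  have hr := norm_nonneg z
  have h2 : ‖(2:ℂ)‖ = 2 := by simp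
  have h0 : ‖Fm k z‖ ≤ 1 + (‖z‖^2 + 2*‖bb k‖*‖z‖)/‖(k:ℂ)^2 + (bb k)^2‖ := by
    unfold Fm FF
    refine (norm_sub_le _ _).trans ?_
    rw [norm_one, norm_div]
    gcongr
    refine (norm_add_le _ _).trans ?_
    rw [norm_mul, norm_mul, norm_mul, norm_pow, Complex.norm_I, h2]
    linarith
  refine h0.trans ?_
  rcases one_or_two k hk with rfl | h
  · simp [aa_bb_sq_one.2, norm_bb_one]; nlinarith
  · obtain ⟨α, β, ha, hb, h1, h2, h3, h4, h5⟩ := real_data k h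
    rw [hb]
    have : ((k:ℂ)^2 + (β:ℂ)^2) = (((k:ℝ)^2 + β^2 : ℝ) : ℂ) := by push_cast; ring
    rw [this, Complex.norm_real, Complex.norm_real, Real.norm_eq_abs, Real.norm_eq_abs,
      abs_of_nonneg (by positivity), abs_of_nonneg (by positivity)]
    have hk0 : (0:ℝ) < (k:ℝ)^2 := by positivity
    have e1 : (‖z‖^2 + 2*β*‖z‖)/((k:ℝ)^2 + β^2) ≤ (‖z‖^2 + 2*β*‖z‖)/(β^2) := by
      gcongr; linarith
    have e2 : 1 + (‖z‖^2 + 2*β*‖z‖)/(β^2) = (1 + ‖z‖/β)^2 := by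
      have : β ≠ 0 := by linarith
      field_simp; ring
    have e3 : ‖z‖/β ≤ 2*‖z‖/(k:ℝ)^2 := by
      rw [div_le_div_iff₀ (by linarith) hk0]
      nlinarith
    have e4 : (1 + ‖z‖/β)^2 ≤ (1 + 2*‖z‖/(k:ℝ)^2)^2 := by
      gcongr
    linarith

lemma Gm_type (k : ℕ) (hk : 1 ≤ k) (z : ℂ) : ‖Gm k z‖ ≤ (1 + 2*‖z‖/(k:ℝ)^2)^2 := by
  unfold Gm
  split_ifs
  · rw [norm_one]
    have : 0 ≤ 2*‖z‖/(k:ℝ)^2 := by positivity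
    nlinarith
  · exact Fm_type k hk z

lemma type_bound_N (N : ℕ) (hN : 2 ≤ N) (z : ℂ) : ‖Ppartial N z‖ ≤
    ‖z‖ * Real.exp (π * (‖z‖+2)) * (Real.exp (π * Real.sqrt (2*‖z‖)))^2 := by
  rw [Ppartial_eq N hN, norm_mul, norm_mul, norm_prod, norm_prod]
  have hr := norm_nonneg z
  have h1 : ∏ m ∈ Finset.range N, ‖Fp (m+1) z‖ ≤ Real.exp (π * (‖z‖+2)) := by
    refine le_trans (Finset.prod_le_prod (fun m _ => norm_nonneg _) ?_)
      (prod_sinh_le (‖z‖+2) (by positivity) N)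
    intro m _
    have := Fp_type (m+1) (by omega) z
    push_cast at this
    exact this
  have h2 : ∏ m ∈ Finset.range N, ‖Gm (m+1) z‖ ≤ (Real.exp (π * Real.sqrt (2*‖z‖)))^2 := by
    have hb := prod_sinh_le (Real.sqrt (2*‖z‖)) (Real.sqrt_nonneg _) N
    rw [Real.sq_sqrt (by positivity)] at hb
    have hb2 := pow_le_pow_left₀ (Finset.prod_nonneg (fun m _ => by positivity)) hb 2
    rw [← Finset.prod_pow] at hb2
    refine le_trans (Finset.prod_le_prod (fun m _ => norm_nonneg _) ?_) hb2
    intro m _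
    have := Gm_type (m+1) (by omega) z
    push_cast at this
    exact this
  have h3 : 0 ≤ ∏ m ∈ Finset.range N, ‖Gm (m+1) z‖ := Finset.prod_nonneg (fun m _ => norm_nonneg _)
  gcongr

lemma type_final (P : ℂ → ℂ) (hP : ∀ z, Tendsto (fun N => Ppartial N z) atTop (nhds (P z))) :
    ∀ ε > (0:ℝ), ∃ C > (0:ℝ), ∀ z : ℂ, ‖P z‖ ≤ C * Real.exp ((π + ε) * ‖z‖) := by
  intro ε hε
  refine ⟨2/ε * Real.exp (2*π + 4*π^2/ε), by positivity, ?_⟩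
  intro z
  have h1 : ‖P z‖ ≤ ‖z‖ * Real.exp (π * (‖z‖+2)) * (Real.exp (π * Real.sqrt (2*‖z‖)))^2 := by
    apply le_of_tendsto (hP z).norm
    filter_upwards [eventually_ge_atTop 2] with N hN
    exact type_bound_N N hN z
  refine h1.trans ?_
  have hr := norm_nonneg z
  generalize ‖z‖ = r at *
  have hsq : Real.sqrt (2*r) ^2 = 2*r := Real.sq_sqrt (by positivity)
  have hs0 := Real.sqrt_nonneg (2*r)
  set s := Real.sqrt (2*r)
  have h2 : r ≤ 2/ε * Real.exp (ε/2*r) := by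
    have := Real.add_one_le_exp (ε/2*r)
    calc r = 2/ε * (ε/2*r) := by field_simp
      _ ≤ _ := by gcongr; linarith
  have h3 : 2*(π*s) ≤ ε/2*r + 4*π^2/ε := by
    have : ε/2*r + 4*π^2/ε - 2*(π*s) = (ε*s/2 - 2*π)^2/ε := by
      have : r = s^2/2 := by linarith
      rw [this]; field_simp; ring
    have h4 : 0 ≤ (ε*s/2 - 2*π)^2/ε := by positivity
    linarith
  rw [← Real.exp_nat_mul]
  push_cast
  calc r * Real.exp (π * (r+2)) * Real.exp (2*(π*s))
      ≤ (2/ε * Real.exp (ε/2*r)) * Real.exp (π*(r+2)) * Real.exp (ε/2*r + 4*π^2/ε) := by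
        gcongr
    _ = 2/ε * Real.exp (2*π + 4*π^2/ε) * Real.exp ((π + ε) * r) := by
        rw [mul_assoc, mul_assoc, mul_assoc, ← Real.exp_add, ← Real.exp_add, ← Real.exp_add]
        congr 2
        ring

/-! ### Bound on the real axis -/

lemma tri {p q : ℂ} {δ : ℝ} (h : ‖p - q‖ ≤ δ) (hq : 1 ≤ ‖q‖) : ‖p‖ ≤ (1 + δ) * ‖q‖ := by
  have h1 : ‖p‖ ≤ ‖q‖ + ‖p - q‖ := by
    have := norm_add_le q (p - q)
    simpa using this
  have hδ : 0 ≤ δ := (norm_nonneg _).trans h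
  nlinarith

lemma norm_I_mul_aa_sub (k : ℕ) (hk : 1 ≤ k) : ‖Complex.I * (aa k) - Complex.I‖ ≤ 4/(k:ℝ)^2 := by
  have : Complex.I * (aa k) - Complex.I = Complex.I * (aa k - 1) := by ring
  rw [this, norm_mul, Complex.norm_I, one_mul]
  exact norm_aa_sub_le k hk

lemma sine_factor (k : ℕ) (hk : 1 ≤ k) (v : ℂ) :
    ‖1 - v^2/(k:ℂ)^2‖ = ‖(k:ℂ) - v‖ * ‖(k:ℂ) + v‖ / (k:ℝ)^2 := by
  have hk' : (k:ℂ) ≠ 0 := by exact_mod_cast (by omega : k ≠ 0)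
  have : 1 - v^2/(k:ℂ)^2 = ((k:ℂ) - v) * ((k:ℂ) + v) / (k:ℂ)^2 := by
    field_simp; ring
  rw [this, norm_div, norm_mul, norm_pow, Complex.norm_natCast]

lemma inv_sq_le_one (k : ℕ) (hk : 1 ≤ k) : 0 ≤ 1/(k:ℝ)^2 ∧ 1/(k:ℝ)^2 ≤ 1 := by
  have : (1:ℝ) ≤ k := by exact_mod_cast hk
  refine ⟨by positivity, ?_⟩
  rw [div_le_one (by positivity)]
  nlinarith

lemma Fp_real (k : ℕ) (hk : 1 ≤ k) (x : ℝ) :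
    ‖Fp k x‖ ≤ (1 + 24/(k:ℝ)^2) * ‖1 - ((x:ℂ) + Complex.I)^2/(k:ℂ)^2‖ := by
  rw [Fp, norm_FF k _ _ (den_a_ne k hk), sine_factor k hk]
  have hI := norm_I_mul_aa_sub k hk
  set v : ℂ := (x:ℂ) + Complex.I with hv
  set u : ℂ := (x:ℂ) + Complex.I * aa k with hu
  have hk0 : (0:ℝ) < (k:ℝ)^2 := by positivity
  have h1 : ‖(k:ℂ) - u‖ ≤ (1 + 4/(k:ℝ)^2) * ‖(k:ℂ) - v‖ := by
    apply tri
    · have : (k:ℂ) - u - ((k:ℂ) - v) = -(Complex.I * aa k - Complex.I) := by rw [hu, hv]; ring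
      rw [this, norm_neg]; exact hI
    · refine le_trans ?_ (Complex.abs_im_le_norm _)
      simp [hv]
  have h2 : ‖(k:ℂ) + u‖ ≤ (1 + 4/(k:ℝ)^2) * ‖(k:ℂ) + v‖ := by
    apply tri
    · have : (k:ℂ) + u - ((k:ℂ) + v) = (Complex.I * aa k - Complex.I) := by rw [hu, hv]; ring
      rw [this]; exact hI
    · refine le_trans ?_ (Complex.abs_im_le_norm _)
      simp [hv]
  have h3 : (1 + 4/(k:ℝ)^2)^2 ≤ 1 + 24/(k:ℝ)^2 := by
    obtain ⟨t0, t1⟩ := inv_sq_le_one k hk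
    have e1 : 4/(k:ℝ)^2 = 4 * (1/(k:ℝ)^2) := by ring
    have e2 : 24/(k:ℝ)^2 = 24 * (1/(k:ℝ)^2) := by ring
    rw [e1, e2]
    nlinarith
  calc ‖(k:ℂ) - u‖ * ‖(k:ℂ) + u‖ / ‖(k:ℂ)^2 + (aa k)^2‖
      ≤ ‖(k:ℂ) - u‖ * ‖(k:ℂ) + u‖ / (k:ℝ)^2 := by
        gcongr; exact den_a_lb k hk
    _ ≤ ((1 + 4/(k:ℝ)^2) * ‖(k:ℂ) - v‖) * ((1 + 4/(k:ℝ)^2) * ‖(k:ℂ) + v‖) / (k:ℝ)^2 := by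
        gcongr
    _ = (1 + 4/(k:ℝ)^2)^2 * (‖(k:ℂ) - v‖ * ‖(k:ℂ) + v‖ / (k:ℝ)^2) := by ring
    _ ≤ _ := by gcongr

lemma Fm_real (k : ℕ) (hk : 1 ≤ k) (x : ℝ) :
    ‖Fm k x‖ ≤ (1 + 11/(k:ℝ)^2) * (1 + x^2/(k:ℝ)^4) := by
  rcases one_or_two k hk with rfl | h
  · refine (Fm_type 1 le_rfl _).trans ?_
    rw [Complex.norm_real, Real.norm_eq_abs]
    have := sq_abs x
    norm_num
    nlinarith [sq_nonneg (|x| - 1)]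
  · obtain ⟨α, β, ha, hb, h1, h2, h3, h4, h5⟩ := real_data k h
    have hk0 : (0:ℝ) < (k:ℝ)^2 := by positivity
    have hlb := den_b_lb k hk
    rw [Fm, norm_FF k _ _ (den_b_ne k hk)]
    have hd : ((k:ℂ)^2 + (β:ℂ)^2) = (((k:ℝ)^2 + β^2 : ℝ) : ℂ) := by push_cast; ring
    have hp : 0 ≤ (k:ℝ)^2 + β^2 := by positivity
    rw [hb, hd, Complex.norm_real, Real.norm_eq_abs, abs_of_nonneg hp] at hlb
    rw [hb, hd, Complex.norm_real, Real.norm_eq_abs, abs_of_nonneg hp]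
    have n1 : ‖(k:ℂ) - ((x:ℂ) + Complex.I * β)‖^2 = ((k:ℝ)-x)^2 + β^2 := by
      rw [Complex.sq_norm, Complex.normSq_apply]; simp; ring
    have n2 : ‖(k:ℂ) + ((x:ℂ) + Complex.I * β)‖^2 = ((k:ℝ)+x)^2 + β^2 := by
      rw [Complex.sq_norm, Complex.normSq_apply]; simp; ring
    have n3 : ‖(k:ℂ) - ((x:ℂ) + Complex.I * β)‖ * ‖(k:ℂ) + ((x:ℂ) + Complex.I * β)‖
        ≤ (k:ℝ)^2 + β^2 + x^2 := by
      nlinarith [sq_nonneg (‖(k:ℂ) - ((x:ℂ) + Complex.I * β)‖ - ‖(k:ℂ) + ((x:ℂ) + Complex.I * β)‖)]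
    have hD : 0 < (k:ℝ)^2 + β^2 := by positivity
    have hk4 : (0:ℝ) < (k:ℝ)^4 := by positivity
    calc _ ≤ ((k:ℝ)^2 + β^2 + x^2) / ((k:ℝ)^2 + β^2) := by gcongr
      _ = 1 + x^2/((k:ℝ)^2 + β^2) := by field_simp
      _ ≤ 1 + (1 + 10/(k:ℝ)^2) * (x^2/(k:ℝ)^4) := by
          gcongr
          rw [← mul_div_assoc, div_le_div_iff₀ hD hk4]
          nlinarith [mul_le_mul_of_nonneg_left hlb (sq_nonneg x)]
      _ ≤ (1 + 11/(k:ℝ)^2) * (1 + x^2/(k:ℝ)^4) := by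
          have q1 : 0 ≤ 1/(k:ℝ)^2 := by positivity
          have q2 : 0 ≤ x^2/(k:ℝ)^4 := by positivity
          have e1 : 10/(k:ℝ)^2 = 10 * (1/(k:ℝ)^2) := by ring
          have e2 : 11/(k:ℝ)^2 = 11 * (1/(k:ℝ)^2) := by ring
          rw [e1, e2]
          nlinarith [mul_nonneg q1 q2]

lemma Gm_real (m : ℕ) (x : ℝ) :
    ‖Gm (m+1) x‖ ≤ (1 + 11/((m:ℝ)+1)^2) * qf |x| m := by
  unfold Gm qf
  split_ifs with h
  · rw [norm_one, mul_one]
    have : 0 ≤ 11/((m:ℝ)+1)^2 := by positivity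
    linarith
  · have := Fm_real (m+1) (by omega) x
    push_cast at this
    rwa [sq_abs]

lemma real_bound_N (N : ℕ) (hN : 2 ≤ N) (x : ℝ) : ‖Ppartial N x‖ ≤
    |x| * (Real.exp (4*24) * ∏ m ∈ Finset.range N, ‖1 - ((x:ℂ) + Complex.I)^2/((m:ℂ)+1)^2‖)
      * (Real.exp (4*11) * ∏ m ∈ Finset.range N, qf |x| m) := by
  rw [Ppartial_eq N hN, norm_mul, norm_mul, norm_prod, norm_prod, Complex.norm_real, Real.norm_eq_abs]
  have h1 := prod_compare_finset 24 (by norm_num) (fun m => ‖Fp (m+1) x‖)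
    (fun m => ‖1 - ((x:ℂ) + Complex.I)^2/((m:ℂ)+1)^2‖) N (Finset.range N) (Finset.Subset.refl _)
    (fun m _ => norm_nonneg _) (fun m _ => by
      have := Fp_real (m+1) (by omega) x
      push_cast at this
      exact this)
  have h2 := prod_compare_finset 11 (by norm_num) (fun m => ‖Gm (m+1) x‖)
    (qf |x|) N (Finset.range N) (Finset.Subset.refl _)
    (fun m _ => norm_nonneg _) (fun m _ => Gm_real m x)
  have h3 : 0 ≤ ∏ m ∈ Finset.range N, ‖Gm (m+1) x‖ := Finset.prod_nonneg (fun m _ => norm_nonneg _)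
  gcongr

lemma real_final (P : ℂ → ℂ) (hP : ∀ z, Tendsto (fun N => Ppartial N z) atTop (nhds (P z))) :
    ∃ C > (0:ℝ), ∀ x : ℝ, ‖P (x:ℂ)‖ ≤ C * Real.exp (Real.sqrt 2 * π * Real.sqrt |x|) / (1 + |x|)^3 := by
  obtain ⟨C1, hC1, hT⟩ := type_final P hP 1 one_pos
  set C2 : ℝ := Real.exp (4*24) * Real.exp (4*11) * Real.exp π with hC2
  have hC2p : 0 < C2 := by positivity
  refine ⟨8 * C1 * Real.exp (π+1) + 128 * C2, by positivity, ?_⟩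
  intro x
  set E := Real.exp (Real.sqrt 2 * π * Real.sqrt |x|) with hE
  have hE1 : 1 ≤ E := Real.one_le_exp (by positivity)
  have hx0 := abs_nonneg x
  rw [le_div_iff₀ (by positivity)]
  rcases le_total |x| 1 with hx | hx
  · have h1 := hT x
    rw [Complex.norm_real, Real.norm_eq_abs] at h1
    have h2 : ‖P x‖ ≤ C1 * Real.exp (π+1) := by
      refine h1.trans ?_
      gcongr
      have := Real.pi_pos
      nlinarith
    have h3 : (1 + |x|)^3 ≤ 8 := by
      calc (1+|x|)^3 ≤ (1+1)^3 := by gcongr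
        _ = 8 := by norm_num
    have h4 : 0 < C1 * Real.exp (π+1) := by positivity
    calc ‖P x‖ * (1+|x|)^3 ≤ (C1 * Real.exp (π+1)) * 8 := by gcongr
      _ ≤ (8 * C1 * Real.exp (π+1) + 128 * C2) * 1 := by nlinarith
      _ ≤ _ := by gcongr
  · have hr : 0 < |x| := by linarith
    have hv : ((x:ℂ) + Complex.I) ≠ 0 := by
      intro h
      have := congrArg Complex.im h
      simp at this
    have t1 := euler_norm _ hv
    have t2 := qf_tendsto |x| hr
    have lim := le_of_tendsto_of_tendsto (hP x).norm
      (((t1.const_mul (Real.exp (4*24))).const_mul |x|).mul (t2.const_mul (Real.exp (4*11)))) (by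
        filter_upwards [eventually_ge_atTop 2] with N hN
        exact real_bound_N N hN x)
    have s1 : ‖Complex.sin (π * ((x:ℂ) + Complex.I))‖ ≤ Real.exp π := by
      refine (norm_sin_ub _).trans ?_
      simp [abs_of_pos Real.pi_pos]
    have s2 : ‖Complex.sin (π * rt |x|)‖^2 ≤ E := by
      have := norm_sin_ub (π * rt |x|)
      rw [rt_im, abs_of_nonneg (show 0 ≤ π * Real.sqrt (|x|/2) by positivity)] at this
      calc _ ≤ (Real.exp (π * Real.sqrt (|x|/2)))^2 := by gcongr
        _ = E := by
          rw [hE, sqrt_id, ← Real.exp_nat_mul]; norm_num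
    have s3 : |x| ≤ ‖(x:ℂ) + Complex.I‖ := by
      have := Complex.abs_re_le_norm ((x:ℂ) + Complex.I)
      simpa using this
    have hpi : 1 ≤ π := by linarith [Real.pi_gt_three]
    have b1 : ‖Complex.sin (π * ((x:ℂ) + Complex.I))‖ / (π * ‖(x:ℂ) + Complex.I‖) ≤ Real.exp π / |x| := by
      apply div_le_div₀ (by positivity) s1 hr
      nlinarith
    have b2 : ‖Complex.sin (π * rt |x|)‖^2 / (π^2 * |x|) / (1 + |x|^2/16) ≤ E * 128 / (1+|x|)^3 := by
      rw [div_div]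
      rw [div_le_div_iff₀ (by positivity) (by positivity)]
      have h3 : (1+|x|)^3 ≤ 128 * (π^2 * |x| * (1 + |x|^2/16)) := by
        calc (1+|x|)^3 ≤ (|x|+|x|)^3 := by gcongr
          _ = 8*|x|^3 := by ring
          _ ≤ 128 * (1^2 * |x| * (1 + |x|^2/16)) := by nlinarith
          _ ≤ _ := by gcongr
      calc _ ≤ E * (128 * (π^2 * |x| * (1 + |x|^2/16))) := by gcongr
        _ = _ := by ring
    have fin : ‖P x‖ ≤ |x| * (Real.exp (4*24) * (Real.exp π / |x|)) * (Real.exp (4*11) * (E * 128 / (1+|x|)^3)) := by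
      refine lim.trans ?_
      gcongr
    have e : |x| * (Real.exp (4*24) * (Real.exp π / |x|)) * (Real.exp (4*11) * (E * 128 / (1+|x|)^3))
        = 128 * C2 * E / (1+|x|)^3 := by
      rw [hC2]; field_simp
    rw [e, le_div_iff₀ (by positivity)] at fin
    refine fin.trans ?_
    gcongr
    have : 0 < 8 * C1 * Real.exp (π+1) := by positivity
    linarith

/-! ### Derivatives at the zeros -/

lemma FF_hasDeriv (k : ℕ) (c z : ℂ) :
    HasDerivAt (FF k c) (-(2*z + 2*Complex.I*c)/((k:ℂ)^2 + c^2)) z := by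
  have h : HasDerivAt (fun z : ℂ => 1 - (z^2 + 2*Complex.I*c*z)/((k:ℂ)^2 + c^2))
      (0 - (2*z + 2*Complex.I*c)/((k:ℂ)^2 + c^2)) z := by
    have h1 : HasDerivAt (fun z : ℂ => z^2) (2*z) z := by
      simpa using hasDerivAt_pow 2 z
    have h2 : HasDerivAt (fun z : ℂ => 2*Complex.I*c*z) (2*Complex.I*c) z := by
      simpa using (hasDerivAt_id z).const_mul (2*Complex.I*c)
    exact (hasDerivAt_const z (1:ℂ)).sub ((h1.add h2).div_const _)
  have e : (-(2*z + 2*Complex.I*c)/((k:ℂ)^2 + c^2)) = 0 - (2*z + 2*Complex.I*c)/((k:ℂ)^2 + c^2) := by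
    rw [neg_div, zero_sub]
  rw [e]
  exact h

lemma FF_zero (k : ℕ) (c : ℂ) (κ : ℂ) (hκ : κ^2 = (k:ℂ)^2) (hne : (k:ℂ)^2 + c^2 ≠ 0) :
    FF k c (-κ - Complex.I*c) = 0 := by
  unfold FF
  have : (-κ - Complex.I*c)^2 + 2*Complex.I*c*(-κ - Complex.I*c) = (k:ℂ)^2 + c^2 := by
    rw [← hκ]
    ring_nf
    rw [Complex.I_sq]
    ring
  rw [this, div_self hne, sub_self]

lemma FF_norm_deriv (k : ℕ) (c : ℂ) (κ : ℂ) (hκ : ‖κ‖ = (k:ℝ)) :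
    ‖deriv (FF k c) (-κ - Complex.I*c)‖ = 2*(k:ℝ)/‖(k:ℂ)^2 + c^2‖ := by
  rw [(FF_hasDeriv k c _).deriv, norm_div]
  have : -(2*(-κ - Complex.I*c) + 2*Complex.I*c) = 2*κ := by ring
  rw [this, norm_mul, hκ]
  norm_num

lemma deriv_mul_zero (g h : ℂ → ℂ) (w : ℂ) (hg : DifferentiableAt ℂ g w)
    (hh : DifferentiableAt ℂ h w) (h0 : h w = 0) :
    deriv (fun z => g z * h z) w = g w * deriv h w := by
  have := (hg.hasDerivAt.mul hh.hasDerivAt).deriv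
  have e : (fun z => g z * h z) = g * h := rfl
  rw [e, this, h0]; ring

lemma deriv_P_p (j N : ℕ) (hN : 2 ≤ N) (hj : j < N) (w : ℂ) (h0 : Fp (j+1) w = 0) :
    deriv (Ppartial N) w = (w * (∏ m ∈ (Finset.range N).erase j, Fp (m+1) w)
      * (∏ m ∈ Finset.range N, Gm (m+1) w)) * deriv (Fp (j+1)) w := by
  have e : Ppartial N = fun z => (z * (∏ m ∈ (Finset.range N).erase j, Fp (m+1) z)
      * (∏ m ∈ Finset.range N, Gm (m+1) z)) * Fp (j+1) z := by
    funext z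
    rw [Ppartial_eq N hN, ← Finset.mul_prod_erase (Finset.range N) (fun m => Fp (m+1) z)
      (Finset.mem_range.mpr hj)]
    ring
  rw [e]
  refine deriv_mul_zero (fun z => (z * (∏ m ∈ (Finset.range N).erase j, Fp (m+1) z)
      * (∏ m ∈ Finset.range N, Gm (m+1) z))) (Fp (j+1)) w ?_ (Fp_diff _ _) h0
  apply DifferentiableAt.mul
  · apply DifferentiableAt.mul differentiableAt_id
    exact DifferentiableAt.fun_finsetProd (fun m _ => Fp_diff _ _)
  · exact DifferentiableAt.fun_finsetProd (fun m _ => Gm_diff _ _)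

lemma deriv_P_m (j N : ℕ) (hN : 2 ≤ N) (hj : j < N) (hj1 : j ≠ 1) (w : ℂ) (h0 : Fm (j+1) w = 0) :
    deriv (Ppartial N) w = (w * (∏ m ∈ Finset.range N, Fp (m+1) w)
      * (∏ m ∈ (Finset.range N).erase j, Gm (m+1) w)) * deriv (Fm (j+1)) w := by
  have hG : ∀ z, Gm (j+1) z = Fm (j+1) z := by
    intro z
    unfold Gm
    rw [if_neg (by omega)]
  have e : Ppartial N = fun z => (z * (∏ m ∈ Finset.range N, Fp (m+1) z)
      * (∏ m ∈ (Finset.range N).erase j, Gm (m+1) z)) * Fm (j+1) z := by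
    funext z
    rw [Ppartial_eq N hN, ← Finset.mul_prod_erase (Finset.range N) (fun m => Gm (m+1) z)
      (Finset.mem_range.mpr hj), hG]
    ring
  rw [e]
  refine deriv_mul_zero (fun z => (z * (∏ m ∈ Finset.range N, Fp (m+1) z)
      * (∏ m ∈ (Finset.range N).erase j, Gm (m+1) z))) (Fm (j+1)) w ?_ (Fm_diff _ _) h0
  apply DifferentiableAt.mul
  · apply DifferentiableAt.mul differentiableAt_id
    exact DifferentiableAt.fun_finsetProd (fun m _ => Fp_diff _ _)
  · exact DifferentiableAt.fun_finsetProd (fun m _ => Gm_diff _ _)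

/-! ### Lower bound at the hyperbolic zeros, for large index -/

lemma half_sqrt3 : (0.85:ℝ) ≤ √3/2 ∧ √3/2 ≤ 0.9 := by
  have := sqrt3_lb
  have := sqrt3_ub
  constructor <;> linarith

lemma re_prod_le (l : ℕ) (u : ℂ) :
    |(l:ℝ)^2 - u.re^2| ≤ ‖(l:ℂ) - u‖ * ‖(l:ℂ) + u‖ := by
  have h1 := Complex.abs_re_le_norm ((l:ℂ) - u)
  have h2 := Complex.abs_re_le_norm ((l:ℂ) + u)
  simp only [Complex.sub_re, Complex.add_re, Complex.natCast_re] at h1 h2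
  have : (l:ℝ)^2 - u.re^2 = ((l:ℝ) - u.re) * ((l:ℝ) + u.re) := by ring
  rw [this, abs_mul]
  gcongr

lemma abs_cases_sq (κ : ℝ) (n : ℕ) (hκ : |κ| = n) : κ = n ∨ κ = -n := by
  rcases abs_choice κ with h | h
  · left; rw [← hκ, h]
  · right; rw [← hκ, h]; ring

lemma b_fac_p (n : ℕ) (hn : 3 ≤ n) (κ α : ℝ) (hκ : |κ| = n) (l : ℕ) (hl : 1 ≤ l) :
    |(l:ℝ)^2 - (n:ℝ)^2|/(l:ℝ)^2 ≤ (1 + 4/(l:ℝ)^2) * ‖Fp l (-(κ:ℂ) - Complex.I * α)‖ := by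
  have hk2 : κ^2 = (n:ℝ)^2 := by rw [← hκ, sq_abs]
  have hn3 : (3:ℝ) ≤ n := by exact_mod_cast hn
  rw [Fp, norm_FF l _ _ (den_a_ne l hl)]
  set u : ℂ := -(κ:ℂ) - Complex.I * α + Complex.I * aa l with hu
  have h := re_prod_le l u
  have hure : u.re = -κ - (aa l).im := by rw [hu]; simp; ring
  have hdp : 0 < ‖(l:ℂ)^2 + (aa l)^2‖ := norm_pos_iff.mpr (den_a_ne l hl)
  have hlp : (0:ℝ) < (l:ℝ)^2 := by positivity
  rcases one_or_two l hl with rfl | h2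
  · rw [hure, aa_one_im] at h
    obtain ⟨s1, s2⟩ := half_sqrt3
    have hd : ‖((1:ℕ):ℂ)^2 + (aa 1)^2‖ = 1 := by
      have := aa_bb_sq_one.1
      push_cast
      rw [one_pow, this, norm_aa_one]
    rw [hd]
    push_cast at h ⊢
    set s := √3/2
    have h3 : (κ - s)^2 - 1 ≤ |1 ^ 2 - (-κ - -s)^2| := by
      rw [abs_sub_comm]
      refine le_trans (le_of_eq ?_) (le_abs_self _)
      ring
    have h4 : |(1:ℝ)^2 - (n:ℝ)^2| = (n:ℝ)^2 - 1 := by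
      rw [abs_sub_comm, abs_of_nonneg] <;> nlinarith
    rw [h4]
    have h5 : (n:ℝ)^2 - 1 ≤ 5 * ((κ - s)^2 - 1) := by
      rcases abs_cases_sq κ n hκ with e | e <;> rw [e] <;> nlinarith
    norm_num at h3 h ⊢
    linarith
  · obtain ⟨α', β', ha, -, -⟩ := real_data l h2
    have him : (aa l).im = 0 := by rw [ha]; simp
    rw [hure, him, sub_zero, neg_sq, hk2] at h
    have hub := den_a_ub l hl
    rw [← mul_div_assoc, div_le_div_iff₀ hlp hdp]
    calc |(l:ℝ)^2 - (n:ℝ)^2| * ‖(l:ℂ)^2 + (aa l)^2‖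
        ≤ (‖(l:ℂ) - u‖ * ‖(l:ℂ) + u‖) * ((l:ℝ)^2 + 4) := by gcongr
      _ = _ := by field_simp

lemma b_fac_m (n : ℕ) (hn : 3 ≤ n) (κ α : ℝ) (hκ : |κ| = n) (hα : α ≤ 2) (l : ℕ) (hl : 1 ≤ l)
    (hl2 : l ≠ 2) :
    1 + (n:ℝ)^2/(l:ℝ)^4 ≤ (1 + 50/(l:ℝ)^2) * ‖Fm l (-(κ:ℂ) - Complex.I * α)‖ := by
  have hk2 : κ^2 = (n:ℝ)^2 := by rw [← hκ, sq_abs]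
  have hn3 : (3:ℝ) ≤ n := by exact_mod_cast hn
  rw [Fm, norm_FF l _ _ (den_b_ne l hl)]
  set u : ℂ := -(κ:ℂ) - Complex.I * α + Complex.I * bb l with hu
  have h := re_prod_le l u
  have hure : u.re = -κ - (bb l).im := by rw [hu]; simp; ring
  have hdp : 0 < ‖(l:ℂ)^2 + (bb l)^2‖ := norm_pos_iff.mpr (den_b_ne l hl)
  have hlp : (0:ℝ) < (l:ℝ)^2 := by positivity
  rcases one_or_two l hl with rfl | h2
  · rw [hure, bb_one_im] at h
    obtain ⟨s1, s2⟩ := half_sqrt3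
    have hd : ‖((1:ℕ):ℂ)^2 + (bb 1)^2‖ = 1 := by
      have := aa_bb_sq_one.2
      push_cast
      rw [one_pow, this, norm_bb_one]
    rw [hd]
    push_cast at h ⊢
    set s := √3/2
    have h3 : (κ + s)^2 - 1 ≤ |1 ^ 2 - (-κ - s)^2| := by
      rw [abs_sub_comm]
      refine le_trans (le_of_eq ?_) (le_abs_self _)
      ring
    have h5 : (n:ℝ)^2 + 1 ≤ 51 * ((κ + s)^2 - 1) := by
      rcases abs_cases_sq κ n hκ with e | e <;> rw [e] <;> nlinarith
    norm_num at h3 h ⊢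
    linarith
  · have hl3 : (3:ℝ) ≤ l := by exact_mod_cast (by omega : 3 ≤ l)
    obtain ⟨α', β', -, hb, q1, q2, q3, q4, q5⟩ := real_data l h2
    set B := β' - α with hB
    have hu2 : u = -(κ:ℂ) + Complex.I * B := by rw [hu, hb, hB]; push_cast; ring
    have hBl : (l:ℝ)^2 - 4 ≤ B := by rw [hB]; linarith
    have n1 : ‖(l:ℂ) - u‖^2 = ((l:ℝ)+κ)^2 + B^2 := by
      rw [Complex.sq_norm, Complex.normSq_apply, hu2]; simp; ring
    have n2 : ‖(l:ℂ) + u‖^2 = ((l:ℝ)-κ)^2 + B^2 := by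
      rw [Complex.sq_norm, Complex.normSq_apply, hu2]; simp; ring
    have n3 : (n:ℝ)^2 + B^2 - (l:ℝ)^2 ≤ ‖(l:ℂ) - u‖ * ‖(l:ℂ) + u‖ := by
      refine le_trans (le_abs_self _) (abs_le_of_sq_le_sq ?_ (by positivity))
      rw [mul_pow, n1, n2, ← hk2]
      nlinarith [sq_nonneg (B*l)]
    have hub := den_b_ub l hl
    have hl4 : (0:ℝ) < (l:ℝ)^4 := by positivity
    have key : (l:ℝ)^4 + (n:ℝ)^2 ≤ (1 + 50/(l:ℝ)^2) * ((n:ℝ)^2 + B^2 - (l:ℝ)^2) := by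
      have hL : (9:ℝ) ≤ (l:ℝ)^2 := by nlinarith
      have hB2 : ((l:ℝ)^2 - 4)^2 ≤ B^2 := by
        apply pow_le_pow_left₀ _ hBl; linarith
      have hn9 : (9:ℝ) ≤ (n:ℝ)^2 := by nlinarith
      have e : (l:ℝ)^4 = ((l:ℝ)^2)^2 := by ring
      rw [e]
      generalize (l:ℝ)^2 = L at *
      have : 1 + 50/L = (L+50)/L := by field_simp
      rw [this, div_mul_eq_mul_div, le_div_iff₀ (by linarith)]
      have h1 : (L+50)*((L-4)^2) ≤ (L+50)*B^2 := by gcongr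
      nlinarith [sq_nonneg (82*L - 434)]
    calc 1 + (n:ℝ)^2/(l:ℝ)^4 = ((l:ℝ)^4 + (n:ℝ)^2)/(l:ℝ)^4 := by field_simp
      _ ≤ (1 + 50/(l:ℝ)^2) * ((n:ℝ)^2 + B^2 - (l:ℝ)^2) / (l:ℝ)^4 := by gcongr
      _ ≤ (1 + 50/(l:ℝ)^2) * (‖(l:ℂ) - u‖ * ‖(l:ℂ) + u‖) / (l:ℝ)^4 := by gcongr
      _ ≤ (1 + 50/(l:ℝ)^2) * (‖(l:ℂ) - u‖ * ‖(l:ℂ) + u‖) / ‖(l:ℂ)^2 + (bb l)^2‖ := by gcongr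
      _ = _ := by ring

lemma b_bound_N (n : ℕ) (hn : 3 ≤ n) (κ α : ℝ) (hκ : |κ| = n) (ha : aa n = α) (hα1 : 1 ≤ α)
    (hα : α ≤ 2) (N : ℕ) (hN : n < N) :
    ∏ m ∈ Finset.range N, qf n m ≤
      2 * Real.exp 216 * ‖deriv (Ppartial N) (-(κ:ℂ) - Complex.I * α)‖ := by
  have hn3 : (3:ℝ) ≤ n := by exact_mod_cast hn
  have hk2 : κ^2 = (n:ℝ)^2 := by rw [← hκ, sq_abs]
  set w : ℂ := -(κ:ℂ) - Complex.I * α with hw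
  obtain ⟨j, rfl⟩ : ∃ j, n = j + 1 := ⟨n - 1, by omega⟩
  have h0 : Fp (j+1) w = 0 := by
    rw [Fp, hw, ← ha]
    exact FF_zero _ _ _ (by exact_mod_cast hk2) (den_a_ne _ (by omega))
  have hnd : ‖deriv (Fp (j+1)) w‖ = 2*((j+1:ℕ):ℝ)/‖((j+1:ℕ):ℂ)^2 + (aa (j+1))^2‖ := by
    have e : Fp (j+1) = FF (j+1) (aa (j+1)) := rfl
    rw [e, hw, ← ha]
    apply FF_norm_deriv
    rw [Complex.norm_real, Real.norm_eq_abs, hκ]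
  rw [deriv_P_p j N (by omega) (by omega) w h0, norm_mul, norm_mul, norm_mul, norm_prod, norm_prod, hnd]
  have h1 := prod_compare_finset 4 (by norm_num)
    (fun m => |((m:ℝ)+1)^2-((j:ℝ)+1)^2|/((m:ℝ)+1)^2) (fun m => ‖Fp (m+1) w‖) N
    ((Finset.range N).erase j) (Finset.erase_subset _ _)
    (fun m _ => by positivity) (fun m _ => by
      have := b_fac_p (j+1) hn κ α hκ (m+1) (by omega)
      push_cast at this
      exact this)
  have h2 := prod_compare_finset 50 (by norm_num) (qf ((j+1:ℕ):ℝ)) (fun m => ‖Gm (m+1) w‖) N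
    (Finset.range N) (Finset.Subset.refl _)
    (fun m _ => by unfold qf; split_ifs <;> positivity) (fun m _ => by
      unfold qf Gm
      split_ifs with hm
      · have : 0 ≤ 50/((m:ℝ)+1)^2 := by positivity
        rw [norm_one]; linarith
      · have := b_fac_m (j+1) hn κ α hκ hα (m+1) (by omega) hm
        push_cast at this ⊢
        exact this)
  have h3 := prod_erase_lb j N (by omega)
  have hwn : ((j+1:ℕ):ℝ) ≤ ‖w‖ := by
    have := Complex.abs_re_le_norm w
    rw [hw] at this ⊢
    simpa [hκ] using this
  have hub := den_a_ub (j+1) (by omega)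
  have hdp := norm_pos_iff.mpr (den_a_ne (j+1) (by omega))
  have h4 : 1 ≤ ‖w‖ * (2*((j+1:ℕ):ℝ)/‖((j+1:ℕ):ℂ)^2 + (aa (j+1))^2‖) := by
    rw [← mul_div_assoc, le_div_iff₀ hdp]
    nlinarith
  set Q := ∏ m ∈ Finset.range N, qf ((j+1:ℕ):ℝ) m
  set A := ∏ m ∈ (Finset.range N).erase j, ‖Fp (m+1) w‖
  set G := ∏ m ∈ Finset.range N, ‖Gm (m+1) w‖
  set D := 2*((j+1:ℕ):ℝ)/‖((j+1:ℕ):ℂ)^2 + (aa (j+1))^2‖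
  have hA : 0 ≤ A := Finset.prod_nonneg (fun m _ => norm_nonneg _)
  have hG : 0 ≤ G := Finset.prod_nonneg (fun m _ => norm_nonneg _)
  have h5 : 1 ≤ 2 * (Real.exp (4*4) * A) := by
    have h31 := h3.trans h1
    generalize Real.exp (4*4) * A = y at h31 ⊢
    linarith
  calc Q ≤ Real.exp (4*50) * G := h2
    _ = (Real.exp (4*50) * G) * 1 * 1 := by ring
    _ ≤ (Real.exp (4*50) * G) * (2 * (Real.exp (4*4) * A)) * (‖w‖ * D) := by gcongr
    _ = 2 * (Real.exp (4*50) * Real.exp (4*4)) * (‖w‖ * A * G * D) := by ring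
    _ = _ := by rw [← Real.exp_add]; norm_num

lemma b_final (P : ℂ → ℂ)
    (hP : ∀ z, Tendsto (fun N => deriv (Ppartial N) z) atTop (nhds (deriv P z)))
    (k : ℤ) (hk : 3 ≤ k.natAbs) :
    Real.exp (Real.sqrt 2 * π * Real.sqrt |(k:ℝ)|) / ((64 * π^2 * Real.exp 216) * |(k:ℝ)|^3)
      ≤ ‖deriv P (Complex.I * lamP k)‖ := by
  rw [I_lamP]
  set n := k.natAbs with hn
  have hκ : |(k:ℝ)| = n := by rw [hn, Nat.cast_natAbs]; push_cast; rfl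
  obtain ⟨α, β, ha, -, h1, h2, -⟩ := real_data n (by omega)
  rw [ha]
  have hn3 : (3:ℝ) ≤ n := by exact_mod_cast hk
  have ec : (k:ℂ) = ((k:ℝ):ℂ) := by push_cast; rfl
  rw [hκ, ec]
  have t2 := qf_tendsto n (by linarith)
  have lim := le_of_tendsto_of_tendsto t2 ((hP (-((k:ℝ):ℂ) - Complex.I * α)).norm.const_mul (2 * Real.exp 216)) (by
    filter_upwards [eventually_gt_atTop n] with N hN
    exact b_bound_N n hk k α hκ ha h1 h2 N hN)
  set D := ‖deriv P (-((k:ℝ):ℂ) - Complex.I * α)‖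
  rw [sqrt_id]
  have hs := norm_sin_lb (π * rt n)
  rw [rt_im] at hs
  set t := π * Real.sqrt ((n:ℝ)/2) with ht
  have ht1 : 1 ≤ t := by
    have : 1 ≤ Real.sqrt ((n:ℝ)/2) := by
      rw [Real.one_le_sqrt]; linarith
    have := Real.pi_gt_three
    nlinarith
  rw [abs_of_nonneg (by linarith)] at hs
  have hE : Real.exp t / 4 ≤ ‖Complex.sin (π * rt n)‖ := by
    have e1 : 2 ≤ Real.exp t := by linarith [Real.add_one_le_exp t]
    have e2 : Real.exp (-t) ≤ 1 := Real.exp_le_one_iff.mpr (by linarith)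
    linarith
  have hE2 : Real.exp (2*t) / 16 ≤ ‖Complex.sin (π * rt n)‖^2 := by
    calc Real.exp (2*t)/16 = (Real.exp t / 4)^2 := by
          rw [two_mul, Real.exp_add]; ring
      _ ≤ _ := by gcongr
  have hden : π^2 * n * (1 + (n:ℝ)^2/16) ≤ 2 * π^2 * (n:ℝ)^3 := by
    have : (n:ℝ) * (1 + (n:ℝ)^2/16) ≤ 2 * (n:ℝ)^3 := by nlinarith
    calc _ = π^2 * ((n:ℝ) * (1 + (n:ℝ)^2/16)) := by ring
      _ ≤ π^2 * (2 * (n:ℝ)^3) := by gcongr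
      _ = _ := by ring
  have hpi := Real.pi_pos
  have hn0 : (0:ℝ) < n := by linarith
  have l2 : Real.exp (2*t) / 16 / (2 * π^2 * (n:ℝ)^3) ≤ 2 * Real.exp 216 * D := by
    refine le_trans ?_ lim
    rw [div_div (‖Complex.sin (π * rt n)‖^2)]
    gcongr
  rw [div_le_iff₀ (by positivity)] at l2 ⊢
  linarith

/-! ### Lower bound at the parabolic zeros, for large index -/

lemma c_fac_p (κ β : ℝ) (hβ : 7 ≤ β) (l : ℕ) (hl : 1 ≤ l) :
    ‖1 - (-(κ:ℂ) - Complex.I * β + Complex.I)^2/(l:ℂ)^2‖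
      ≤ (1 + 124/(l:ℝ)^2) * ‖Fp l (-(κ:ℂ) - Complex.I * β)‖ := by
  rw [Fp, norm_FF l _ _ (den_a_ne l hl), sine_factor l hl]
  have hI := norm_I_mul_aa_sub l hl
  set v : ℂ := -(κ:ℂ) - Complex.I * β + Complex.I with hv
  set u : ℂ := -(κ:ℂ) - Complex.I * β + Complex.I * aa l with hu
  have hlp : (0:ℝ) < (l:ℝ)^2 := by positivity
  have hre : (aa l).re ≤ 2 := (Complex.re_le_norm _).trans (norm_aa_le l hl)
  have him : u.im = -β + (aa l).re := by rw [hu]; simp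
  have h1 : ‖(l:ℂ) - v‖ ≤ (1 + 4/(l:ℝ)^2) * ‖(l:ℂ) - u‖ := by
    apply tri
    · have : (l:ℂ) - v - ((l:ℂ) - u) = (Complex.I * aa l - Complex.I) := by rw [hu, hv]; ring
      rw [this]; exact hI
    · refine le_trans ?_ (Complex.abs_im_le_norm _)
      rw [Complex.sub_im, Complex.natCast_im, zero_sub, abs_neg, abs_of_neg] <;> linarith
  have h2 : ‖(l:ℂ) + v‖ ≤ (1 + 4/(l:ℝ)^2) * ‖(l:ℂ) + u‖ := by
    apply tri
    · have : (l:ℂ) + v - ((l:ℂ) + u) = -(Complex.I * aa l - Complex.I) := by rw [hu, hv]; ring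
      rw [this, norm_neg]; exact hI
    · refine le_trans ?_ (Complex.abs_im_le_norm _)
      rw [Complex.add_im, Complex.natCast_im, zero_add, abs_of_neg] <;> linarith
  have h3 : (1 + 4/(l:ℝ)^2)^3 ≤ 1 + 124/(l:ℝ)^2 := by
    obtain ⟨t0, t1⟩ := inv_sq_le_one l hl
    have e1 : 4/(l:ℝ)^2 = 4 * (1/(l:ℝ)^2) := by ring
    have e2 : 124/(l:ℝ)^2 = 124 * (1/(l:ℝ)^2) := by ring
    rw [e1, e2]
    generalize 1/(l:ℝ)^2 = t at *
    nlinarith [mul_nonneg t0 (sub_nonneg.mpr t1), mul_nonneg (mul_nonneg t0 t0) (sub_nonneg.mpr t1)]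
  have hdp : 0 < ‖(l:ℂ)^2 + (aa l)^2‖ := norm_pos_iff.mpr (den_a_ne l hl)
  have h4 : 1/(l:ℝ)^2 ≤ (1 + 4/(l:ℝ)^2)/‖(l:ℂ)^2 + (aa l)^2‖ := by
    rw [div_le_div_iff₀ hlp hdp]
    have := den_a_ub l hl
    have e : (1 + 4/(l:ℝ)^2) * (l:ℝ)^2 = (l:ℝ)^2 + 4 := by field_simp
    rw [e]; linarith
  calc ‖(l:ℂ) - v‖ * ‖(l:ℂ) + v‖ / (l:ℝ)^2
      = ‖(l:ℂ) - v‖ * ‖(l:ℂ) + v‖ * (1 / (l:ℝ)^2) := by ring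
    _ ≤ ((1 + 4/(l:ℝ)^2) * ‖(l:ℂ) - u‖) * ((1 + 4/(l:ℝ)^2) * ‖(l:ℂ) + u‖) *
        ((1 + 4/(l:ℝ)^2)/‖(l:ℂ)^2 + (aa l)^2‖) := by gcongr
    _ = (1 + 4/(l:ℝ)^2)^3 * (‖(l:ℂ) - u‖ * ‖(l:ℂ) + u‖ / ‖(l:ℂ)^2 + (aa l)^2‖) := by ring
    _ ≤ _ := by gcongr

lemma im_prod_le (l : ℕ) (u : ℂ) : |u.im|^2 ≤ ‖(l:ℂ) - u‖ * ‖(l:ℂ) + u‖ := by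
  have h1 := Complex.abs_im_le_norm ((l:ℂ) - u)
  have h2 := Complex.abs_im_le_norm ((l:ℂ) + u)
  simp only [Complex.sub_im, Complex.add_im, Complex.natCast_im, zero_sub, zero_add, abs_neg] at h1 h2
  rw [sq]
  gcongr

lemma beta_sep (x y L M : ℝ) (hx : 2 ≤ x) (hy : 2 ≤ y) (h1 : L * (x-1) = x^2) (h2 : M * (y-1) = y^2) :
    |L - M| ≤ |x - y| := by
  have e : (L - M) * ((x-1)*(y-1)) = (x-y) * ((x-1)*(y-1) - 1) := by
    have : (L - M) * ((x-1)*(y-1)) = (L*(x-1))*(y-1) - (M*(y-1))*(x-1) := by ring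
    rw [this, h1, h2]; ring
  have hp : 1 ≤ (x-1)*(y-1) := by nlinarith
  generalize (x-1)*(y-1) = p at *
  have e2 := congrArg abs e
  rw [abs_mul, abs_mul, abs_of_nonneg (by linarith : 0 ≤ p), abs_of_nonneg (by linarith : 0 ≤ p-1)] at e2
  by_contra hc
  push Not at hc
  have := abs_nonneg (x-y)
  nlinarith

lemma c_fac_m (n : ℕ) (hn : 3 ≤ n) (κ α β : ℝ) (q1 : 1 ≤ α) (q2 : α ≤ 2) (q3 : 2 ≤ β)
    (q4 : α + β = (n:ℝ)^2) (q5 : α * β = (n:ℝ)^2) (l : ℕ) (hl : 1 ≤ l) (hl2 : l ≠ 2) :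
    (|(l:ℝ)^2 - (n:ℝ)^2|/(l:ℝ)^2)^2 ≤ (1 + 3/(l:ℝ)^2) * ‖Fm l (-(κ:ℂ) - Complex.I * β)‖ := by
  have hn3 : (3:ℝ) ≤ n := by exact_mod_cast hn
  rw [Fm, norm_FF l _ _ (den_b_ne l hl)]
  set u : ℂ := -(κ:ℂ) - Complex.I * β + Complex.I * bb l with hu
  have h := im_prod_le l u
  have him : u.im = -β + (bb l).re := by rw [hu]; simp
  have hdp : 0 < ‖(l:ℂ)^2 + (bb l)^2‖ := norm_pos_iff.mpr (den_b_ne l hl)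
  have hlp : (0:ℝ) < (l:ℝ)^2 := by positivity
  rcases one_or_two l hl with rfl | h2
  · have hd : ‖((1:ℕ):ℂ)^2 + (bb 1)^2‖ = 1 := by
      have := aa_bb_sq_one.2
      push_cast
      rw [one_pow, this, norm_bb_one]
    rw [hd]
    rw [him, bb_one_re, sq_abs] at h
    push_cast at h ⊢
    have h5 : ((n:ℝ)^2 - 1)^2 ≤ 4 * (-β + 1/2)^2 := by
      have a1 : (n:ℝ)^2 - 1 ≤ 2*(β - 1/2) := by nlinarith
      have a0 : 0 ≤ (n:ℝ)^2 - 1 := by nlinarith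
      calc ((n:ℝ)^2 - 1)^2 ≤ (2*(β - 1/2))^2 := by gcongr
        _ = _ := by ring
    rw [div_pow, sq_abs]
    norm_num at h h5 ⊢
    nlinarith
  · obtain ⟨α', β', -, hb, p1, p2, p3, p4, p5⟩ := real_data l h2
    rw [him, hb, Complex.ofReal_re] at h
    have hs : |(l:ℝ)^2 - (n:ℝ)^2| ≤ |β' - β| := by
      apply beta_sep β' β _ _ p3 q3
      · nlinarith
      · nlinarith
    have e : -β + β' = β' - β := by ring
    rw [e] at h
    have hub := den_b_ub l hl
    rw [hb] at hub hdp ⊢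
    have hl4 : (0:ℝ) < (l:ℝ)^4 := by positivity
    have h3 : 0 ≤ 3/(l:ℝ)^2 := by positivity
    calc (|(l:ℝ)^2 - (n:ℝ)^2|/(l:ℝ)^2)^2 = |(l:ℝ)^2 - (n:ℝ)^2|^2/(l:ℝ)^4 := by
          rw [div_pow]; ring_nf
      _ ≤ |β' - β|^2/(l:ℝ)^4 := by gcongr
      _ ≤ (‖(l:ℂ) - u‖ * ‖(l:ℂ) + u‖)/‖(l:ℂ)^2 + (β':ℂ)^2‖ := by gcongr
      _ = 1 * ((‖(l:ℂ) - u‖ * ‖(l:ℂ) + u‖)/‖(l:ℂ)^2 + (β':ℂ)^2‖) := by ring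
      _ ≤ _ := by gcongr; linarith

lemma c_bound_N (n : ℕ) (hn : 3 ≤ n) (κ α β : ℝ) (hκ : |κ| = n) (hb : bb n = β)
    (q1 : 1 ≤ α) (q2 : α ≤ 2) (q3 : 2 ≤ β)
    (q4 : α + β = (n:ℝ)^2) (q5 : α * β = (n:ℝ)^2) (N : ℕ) (hN : n < N) :
    ∏ m ∈ Finset.range N, ‖1 - (-(κ:ℂ) - Complex.I * β + Complex.I)^2/((m:ℂ)+1)^2‖ ≤
      4 * (n:ℝ)^5 * Real.exp 508 * ‖deriv (Ppartial N) (-(κ:ℂ) - Complex.I * β)‖ := by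
  have hn3 : (3:ℝ) ≤ n := by exact_mod_cast hn
  have hk2 : κ^2 = (n:ℝ)^2 := by rw [← hκ, sq_abs]
  have hβ7 : 7 ≤ β := by nlinarith
  set w : ℂ := -(κ:ℂ) - Complex.I * β with hw
  obtain ⟨j, rfl⟩ : ∃ j, n = j + 1 := ⟨n - 1, by omega⟩
  have h0 : Fm (j+1) w = 0 := by
    rw [Fm, hw, ← hb]
    exact FF_zero _ _ _ (by exact_mod_cast hk2) (den_b_ne _ (by omega))
  have hnd : ‖deriv (Fm (j+1)) w‖ = 2*((j+1:ℕ):ℝ)/‖((j+1:ℕ):ℂ)^2 + (bb (j+1))^2‖ := by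
    have e : Fm (j+1) = FF (j+1) (bb (j+1)) := rfl
    rw [e, hw, ← hb]
    apply FF_norm_deriv
    rw [Complex.norm_real, Real.norm_eq_abs, hκ]
  rw [deriv_P_m j N (by omega) (by omega) (by omega) w h0, norm_mul, norm_mul, norm_mul, norm_prod,
    norm_prod, hnd]
  have h1 := prod_compare_finset 124 (by norm_num)
    (fun m => ‖1 - (w + Complex.I)^2/((m:ℂ)+1)^2‖) (fun m => ‖Fp (m+1) w‖) N
    (Finset.range N) (Finset.Subset.refl _)
    (fun m _ => by positivity) (fun m _ => by
      have := c_fac_p κ β hβ7 (m+1) (by omega)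
      push_cast at this
      exact this)
  set ν : ℝ := ((j+1:ℕ):ℝ) with hν
  have hνj : (j:ℝ) + 1 = ν := by rw [hν]; push_cast; rfl
  have h2 := prod_compare_finset 3 (by norm_num)
    (fun m => (|((m:ℝ)+1)^2-((j:ℝ)+1)^2|/((m:ℝ)+1)^2)^2 / (if m = 1 then ν^4 else 1))
    (fun m => ‖Gm (m+1) w‖) N
    ((Finset.range N).erase j) (Finset.erase_subset _ _)
    (fun m _ => by split_ifs <;> positivity) (fun m _ => by
      unfold Gm
      by_cases hm : m = 1
      · subst hm
        rw [if_pos rfl, if_pos rfl, hνj, norm_one]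
        push_cast
        have a1 : |((1:ℝ)+1)^2 - ν^2| ≤ ν^2 := by
          rw [abs_le]; constructor <;> nlinarith
        rw [div_le_iff₀ (by positivity), div_pow]
        have a2 : |((1:ℝ)+1)^2 - ν^2|^2 ≤ (ν^2)^2 := by gcongr
        have a3 : (ν^2)^2 = ν^4 := by ring
        norm_num at a2 ⊢
        nlinarith
      · rw [if_neg hm, if_neg (by omega), div_one]
        have := c_fac_m (j+1) hn κ α β q1 q2 q3 q4 q5 (m+1) (by omega) (by omega)
        rw [← hν] at this
        push_cast at this ⊢
        rw [hνj]
        exact this)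
  have h3 := prod_erase_lb j N (by omega)
  rw [Finset.prod_div_distrib, Finset.prod_pow, Finset.prod_ite_eq' , if_pos (by
    rw [Finset.mem_erase, Finset.mem_range]; omega)] at h2
  have hwn : ν^2/2 ≤ ‖w‖ := by
    have := Complex.abs_im_le_norm w
    have e : w.im = -β := by rw [hw]; simp
    rw [e, abs_neg, abs_of_nonneg (by linarith)] at this
    nlinarith
  have hub := den_b_ub (j+1) (by omega)
  have hdp := norm_pos_iff.mpr (den_b_ne (j+1) (by omega))
  rw [← hν] at hub
  have h4 : 1 ≤ ν * (‖w‖ * (2*ν/‖((j+1:ℕ):ℂ)^2 + (bb (j+1))^2‖)) := by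
    rw [← mul_div_assoc, ← mul_div_assoc, le_div_iff₀ hdp, one_mul]
    calc _ ≤ ν^4 := hub
      _ = ν * (ν^2/2 * (2*ν)) := by ring
      _ ≤ _ := by gcongr
  set A := ∏ m ∈ Finset.range N, ‖Fp (m+1) w‖
  set G := ∏ m ∈ (Finset.range N).erase j, ‖Gm (m+1) w‖
  set D := 2*ν/‖((j+1:ℕ):ℂ)^2 + (bb (j+1))^2‖
  set S := ∏ m ∈ Finset.range N, ‖1 - (w + Complex.I)^2/((m:ℂ)+1)^2‖
  have hA : 0 ≤ A := Finset.prod_nonneg (fun m _ => norm_nonneg _)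
  have hG : 0 ≤ G := Finset.prod_nonneg (fun m _ => norm_nonneg _)
  have h5 : 1 ≤ 4 * ν^4 * (Real.exp (4*3) * G) := by
    have h31 : (1/2:ℝ)^2/ν^4 ≤ Real.exp (4*3) * G := by
      refine le_trans ?_ h2
      gcongr
    generalize Real.exp (4*3) * G = y at h31 ⊢
    rw [div_le_iff₀ (by positivity)] at h31
    linarith
  calc S ≤ Real.exp (4*124) * A := h1
    _ = (Real.exp (4*124) * A) * 1 * 1 := by ring
    _ ≤ (Real.exp (4*124) * A) * (4 * ν^4 * (Real.exp (4*3) * G)) * (ν * (‖w‖ * D)) := by gcongr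
    _ = 4 * ν^5 * (Real.exp (4*124) * Real.exp (4*3)) * (‖w‖ * A * G * D) := by ring
    _ = _ := by rw [← Real.exp_add]; norm_num

lemma c_final (P : ℂ → ℂ)
    (hP : ∀ z, Tendsto (fun N => deriv (Ppartial N) z) atTop (nhds (deriv P z)))
    (k : ℤ) (hk : 3 ≤ k.natAbs) :
    Real.exp (π * (k:ℝ)^2) / ((32 * π * Real.exp (3*π) * Real.exp 508) * |(k:ℝ)|^7)
      ≤ ‖deriv P (Complex.I * lamM k)‖ := by
  rw [I_lamM]
  set n := k.natAbs with hn
  have hκ : |(k:ℝ)| = n := by rw [hn, Nat.cast_natAbs]; push_cast; rfl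
  obtain ⟨α, β, -, hb, q1, q2, q3, q4, q5⟩ := real_data n (by omega)
  rw [hb]
  have hn3 : (3:ℝ) ≤ n := by exact_mod_cast hk
  have hβ7 : 7 ≤ β := by nlinarith
  have ec : (k:ℂ) = ((k:ℝ):ℂ) := by push_cast; rfl
  rw [← sq_abs, hκ, ec]
  set v : ℂ := -((k:ℝ):ℂ) - Complex.I * β + Complex.I with hv
  have him : v.im = -(β - 1) := by rw [hv]; simp; ring
  have hv0 : v ≠ 0 := by
    intro h
    have h2 := congrArg Complex.im h
    rw [him, Complex.zero_im] at h2
    linarith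
  have t1 := euler_norm v hv0
  have lim := le_of_tendsto_of_tendsto t1
    ((hP (-((k:ℝ):ℂ) - Complex.I * β)).norm.const_mul (4 * (n:ℝ)^5 * Real.exp 508)) (by
    filter_upwards [eventually_gt_atTop n] with N hN
    exact c_bound_N n hk k α β hκ hb q1 q2 q3 q4 q5 N hN)
  set D := ‖deriv P (-((k:ℝ):ℂ) - Complex.I * β)‖
  have hpi := Real.pi_gt_three
  have hs := norm_sin_lb (π * v)
  set t := π * (β - 1) with ht
  have him2 : (π * v).im = -t := by
    rw [Complex.im_ofReal_mul, him, ht]; ring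
  have ht1 : 1 ≤ t := by nlinarith
  rw [him2, abs_neg, abs_of_nonneg (by linarith)] at hs
  have hE : Real.exp t / 4 ≤ ‖Complex.sin (π * v)‖ := by
    have e1 : 2 ≤ Real.exp t := by linarith [Real.add_one_le_exp t]
    have e2 : Real.exp (-t) ≤ 1 := Real.exp_le_one_iff.mpr (by linarith)
    linarith
  have hE2 : Real.exp (π * (n:ℝ)^2) ≤ Real.exp (3*π) * Real.exp t := by
    rw [← Real.exp_add]
    gcongr
    nlinarith
  have hvn : ‖v‖ ≤ 2 * (n:ℝ)^2 := by
    have := Complex.norm_le_abs_re_add_abs_im v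
    have hre : v.re = -k := by rw [hv]; simp
    rw [him, hre, abs_neg, abs_neg, hκ, abs_of_nonneg (by linarith)] at this
    nlinarith
  have hv1 : 0 < ‖v‖ := norm_pos_iff.mpr hv0
  have hn0 : (0:ℝ) < n := by linarith
  have l2 : Real.exp t / 4 / (π * (2 * (n:ℝ)^2)) ≤ 4 * (n:ℝ)^5 * Real.exp 508 * D := by
    refine le_trans ?_ lim
    gcongr
  rw [div_le_iff₀ (by positivity)] at l2 ⊢
  have l3 := mul_le_mul_of_nonneg_left l2 (Real.exp_pos (3*π)).le
  calc _ ≤ Real.exp (3*π) * Real.exp t := hE2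
    _ = 4 * (Real.exp (3*π) * (Real.exp t/4)) := by ring
    _ ≤ 4 * (Real.exp (3*π) * (4 * (n:ℝ)^5 * Real.exp 508 * D * (π * (2 * (n:ℝ)^2)))) := by gcongr
    _ = _ := by ring

/-! ### The indices `±1` and conclusion -/

lemma prod_limit_ne (u : ℕ → ℂ) (C : ℝ) (h0 : ∀ m, u m ≠ 0)
    (h : ∀ m, ‖u m - 1‖ ≤ C/((m:ℝ)+1)^2) :
    ∃ L : ℂ, L ≠ 0 ∧ Tendsto (fun N => ∏ m ∈ Finset.range N, u m) atTop (nhds L) := by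
  have hs : Summable (fun m => ‖u m - 1‖) := by
    refine Summable.of_nonneg_of_le (fun m => norm_nonneg _) (fun m => ?_) (summable_inv_sq.mul_left C)
    rw [mul_one_div]; exact h m
  have hm := multipliable_one_add_of_summable hs
  have hne := tprod_one_add_ne_zero_of_summable (f := fun m => u m - 1) (by
    intro m
    simpa using h0 m) hs
  refine ⟨_, hne, ?_⟩
  have := hm.hasProd.tendsto_prod_nat
  simpa using this

lemma FF_ne (l : ℕ) (c z : ℂ) (h : (l:ℂ)^2 + c^2 ≠ 0)
    (h1 : z + Complex.I * c ≠ l) (h2 : z + Complex.I * c ≠ -l) : FF l c z ≠ 0 := by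
  rw [← norm_ne_zero_iff, norm_FF l c z h]
  apply div_ne_zero
  · apply mul_ne_zero
    · rw [norm_ne_zero_iff, sub_ne_zero]; exact h1.symm
    · rw [norm_ne_zero_iff]
      intro e
      apply h2
      linear_combination e
  · exact norm_ne_zero_iff.mpr h

lemma FF_ne_of_im (l : ℕ) (c z : ℂ) (h : (l:ℂ)^2 + c^2 ≠ 0) (h1 : z.im + c.re ≠ 0) : FF l c z ≠ 0 := by
  apply FF_ne l c z h
  · intro e
    have := congrArg Complex.im e
    simp at this
    exact h1 this
  · intro e
    have := congrArg Complex.im e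
    simp at this
    exact h1 this

lemma Fp_ne_of_im (l : ℕ) (hl : 2 ≤ l) (z : ℂ) (hz : z.im = -(1/2)) : Fp l z ≠ 0 := by
  obtain ⟨α, β, ha, hb, h1, -⟩ := real_data l hl
  apply FF_ne_of_im _ _ _ (den_a_ne l (by omega))
  rw [ha, hz, Complex.ofReal_re]
  linarith

lemma Gm_ne_of_im (l : ℕ) (hl : 2 ≤ l) (z : ℂ) (hz : z.im = -(1/2)) : Gm l z ≠ 0 := by
  unfold Gm
  split_ifs
  · exact one_ne_zero
  · obtain ⟨α, β, ha, hb, h1, h2, h3, -⟩ := real_data l hl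
    apply FF_ne_of_im _ _ _ (den_b_ne l (by omega))
    rw [hb, hz, Complex.ofReal_re]
    linarith

lemma kappa_ne (κ s : ℝ) (hκ : κ = 1 ∨ κ = -1) (hs : s = √3 ∨ s = -√3) :
    -κ + s ≠ 1 ∧ -κ + s ≠ -1 := by
  have h1 := sqrt3_lb
  have h2 := sqrt3_ub
  rcases hκ with rfl | rfl <;> rcases hs with rfl | rfl <;>
    constructor <;> intro h <;> linarith

lemma one_p (P : ℂ → ℂ)
    (hP : ∀ z, Tendsto (fun N => deriv (Ppartial N) z) atTop (nhds (deriv P z)))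
    (κ : ℝ) (hκ : κ = 1 ∨ κ = -1) : deriv P (-(κ:ℂ) - Complex.I * aa 1) ≠ 0 := by
  set w : ℂ := -(κ:ℂ) - Complex.I * aa 1 with hw
  have him : w.im = -(1/2) := by rw [hw]; simp [aa_one_re]
  have hw0 : w ≠ 0 := by
    intro e
    rw [e] at him
    norm_num at him
  have hκ2 : κ^2 = 1 := by rcases hκ with rfl | rfl <;> norm_num
  have h0 : Fp (0+1) w = 0 := by
    rw [Fp, hw]
    exact FF_zero _ _ _ (by push_cast; exact_mod_cast (by simpa using hκ2)) (den_a_ne _ (by omega))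
  have hnd : deriv (Fp (0+1)) w ≠ 0 := by
    rw [← norm_ne_zero_iff]
    have e : Fp (0+1) = FF (0+1) (aa (0+1)) := rfl
    have e2 := FF_norm_deriv (0+1) (aa (0+1)) κ (by
      rw [Complex.norm_real]; rcases hκ with rfl | rfl <;> norm_num)
    rw [e, hw, e2]
    apply div_ne_zero
    · norm_num
    · exact norm_ne_zero_iff.mpr (den_a_ne _ (by omega))
  obtain ⟨L1, hL1, t1⟩ := prod_limit_ne (fun m => if m = 0 then 1 else Fp (m+1) w) (‖w‖^2 + 4*‖w‖)
    (fun m => by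
      split_ifs with hm
      · exact one_ne_zero
      · exact Fp_ne_of_im _ (by omega) _ him)
    (fun m => by
      split_ifs with hm
      · rw [sub_self, norm_zero]; positivity
      · have := Fp_sub_one_le (m+1) (by omega) w
        push_cast at this
        exact this)
  obtain ⟨L2, hL2, t2⟩ := prod_limit_ne (fun m => Gm (m+1) w) (11*(‖w‖^2 + 2*‖w‖))
    (fun m => by
      rcases Nat.eq_zero_or_pos m with rfl | hm
      · unfold Gm
        rw [if_neg (by norm_num)]
        have hre : (w + Complex.I * bb 1).re = -κ + -√3 := by
          rw [hw]; simp [aa_one_im, bb_one_im]; ring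
        obtain ⟨k1, k2⟩ := kappa_ne κ (-√3) hκ (Or.inr rfl)
        apply FF_ne _ _ _ (den_b_ne 1 le_rfl)
        · intro e
          have := congrArg Complex.re e
          rw [hre] at this
          apply k1; simpa using this
        · intro e
          have := congrArg Complex.re e
          rw [hre] at this
          apply k2; simpa using this
      · exact Gm_ne_of_im _ (by omega) _ him)
    (fun m => by
      have := Gm_sub_one_le (m+1) (by omega) w
      push_cast at this
      exact this)
  have lim : Tendsto (fun N => deriv (Ppartial N) w) atTop
      (nhds ((w * L1 * L2) * deriv (Fp (0+1)) w)) := by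
    refine Tendsto.congr' ?_ (((t1.const_mul w).mul t2).mul_const _)
    filter_upwards [eventually_ge_atTop 2] with N hN
    rw [deriv_P_p 0 N hN (by omega) w h0, ← Finset.prod_erase (a := 0) (Finset.range N)
      (f := fun m => if m = 0 then 1 else Fp (m+1) w) (by simp)]
    congr 3
    refine Finset.prod_congr rfl (fun m hm => ?_)
    rw [if_neg (Finset.ne_of_mem_erase hm)]
  rw [tendsto_nhds_unique (hP w) lim]
  exact mul_ne_zero (mul_ne_zero (mul_ne_zero hw0 hL1) hL2) hnd

lemma one_m (P : ℂ → ℂ)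
    (hP : ∀ z, Tendsto (fun N => deriv (Ppartial N) z) atTop (nhds (deriv P z)))
    (κ : ℝ) (hκ : κ = 1 ∨ κ = -1) : deriv P (-(κ:ℂ) - Complex.I * bb 1) ≠ 0 := by
  set w : ℂ := -(κ:ℂ) - Complex.I * bb 1 with hw
  have him : w.im = -(1/2) := by rw [hw]; simp [bb_one_re]
  have hw0 : w ≠ 0 := by
    intro e
    rw [e] at him
    norm_num at him
  have hκ2 : κ^2 = 1 := by rcases hκ with rfl | rfl <;> norm_num
  have h0 : Fm (0+1) w = 0 := by
    rw [Fm, hw]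
    exact FF_zero _ _ _ (by push_cast; exact_mod_cast (by simpa using hκ2)) (den_b_ne _ (by omega))
  have hnd : deriv (Fm (0+1)) w ≠ 0 := by
    rw [← norm_ne_zero_iff]
    have e : Fm (0+1) = FF (0+1) (bb (0+1)) := rfl
    have e2 := FF_norm_deriv (0+1) (bb (0+1)) κ (by
      rw [Complex.norm_real]; rcases hκ with rfl | rfl <;> norm_num)
    rw [e, hw, e2]
    apply div_ne_zero
    · norm_num
    · exact norm_ne_zero_iff.mpr (den_b_ne _ (by omega))
  obtain ⟨L1, hL1, t1⟩ := prod_limit_ne (fun m => if m = 0 then 1 else Gm (m+1) w)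
    (11*(‖w‖^2 + 2*‖w‖))
    (fun m => by
      split_ifs with hm
      · exact one_ne_zero
      · exact Gm_ne_of_im _ (by omega) _ him)
    (fun m => by
      split_ifs with hm
      · rw [sub_self, norm_zero]; positivity
      · have := Gm_sub_one_le (m+1) (by omega) w
        push_cast at this
        exact this)
  obtain ⟨L2, hL2, t2⟩ := prod_limit_ne (fun m => Fp (m+1) w) (‖w‖^2 + 4*‖w‖)
    (fun m => by
      rcases Nat.eq_zero_or_pos m with rfl | hm
      · have hre : (w + Complex.I * aa 1).re = -κ + √3 := by
          rw [hw]; simp [aa_one_im, bb_one_im]; ring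
        obtain ⟨k1, k2⟩ := kappa_ne κ (√3) hκ (Or.inl rfl)
        apply FF_ne _ _ _ (den_a_ne 1 le_rfl)
        · intro e
          have := congrArg Complex.re e
          rw [hre] at this
          apply k1; simpa using this
        · intro e
          have := congrArg Complex.re e
          rw [hre] at this
          apply k2; simpa using this
      · exact Fp_ne_of_im _ (by omega) _ him)
    (fun m => by
      have := Fp_sub_one_le (m+1) (by omega) w
      push_cast at this
      exact this)
  have lim : Tendsto (fun N => deriv (Ppartial N) w) atTop
      (nhds ((w * L2 * L1) * deriv (Fm (0+1)) w)) := by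
    refine Tendsto.congr' ?_ (((t2.const_mul w).mul t1).mul_const _)
    filter_upwards [eventually_ge_atTop 2] with N hN
    rw [deriv_P_m 0 N hN (by omega) (by omega) w h0, ← Finset.prod_erase (a := 0) (Finset.range N)
      (f := fun m => if m = 0 then 1 else Gm (m+1) w) (by simp)]
    congr 2
    refine Finset.prod_congr rfl (fun m hm => ?_)
    rw [if_neg (Finset.ne_of_mem_erase hm)]
  rw [tendsto_nhds_unique (hP w) lim]
  exact mul_ne_zero (mul_ne_zero (mul_ne_zero hw0 hL2) hL1) hnd

lemma combine (f d g : ℤ → ℝ) (C0 : ℝ) (hC0 : 0 < C0) (hf : ∀ k, 0 ≤ f k)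
    (hg : ∀ k, k ≠ 0 → 0 < g k)
    (h3 : ∀ k : ℤ, 3 ≤ k.natAbs → f k / (C0 * g k) ≤ d k)
    (h1 : ∀ k : ℤ, (k = 1 ∨ k = -1) → 0 < d k) :
    ∃ C1 > 0, ∀ C, C1 ≤ C → ∀ k : ℤ, k ≠ 0 → k ≠ 2 → k ≠ -2 → f k / (C * g k) ≤ d k := by
  have p1 := h1 1 (Or.inl rfl)
  have p2 := h1 (-1) (Or.inr rfl)
  have g1 := hg 1 (by norm_num)
  have g2 := hg (-1) (by norm_num)
  have r1 : 0 ≤ f 1/(d 1 * g 1) := div_nonneg (hf _) (by positivity)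
  have r2 : 0 ≤ f (-1)/(d (-1) * g (-1)) := div_nonneg (hf _) (by positivity)
  refine ⟨C0 + f 1/(d 1 * g 1) + f (-1)/(d (-1) * g (-1)), by linarith, ?_⟩
  intro C hC k k0 k2 k2'
  have hCp : 0 < C := by linarith
  have hgk := hg k k0
  rw [div_le_iff₀ (by positivity)]
  by_cases hk : 3 ≤ k.natAbs
  · have := h3 k hk
    have hd : 0 ≤ d k := le_trans (div_nonneg (hf k) (by positivity)) this
    rw [div_le_iff₀ (by positivity)] at this
    refine this.trans ?_
    gcongr
    linarith
  · have hk1 : k = 1 ∨ k = -1 := by omega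
    rcases hk1 with rfl | rfl
    · have h : f 1/(d 1 * g 1) ≤ C := by linarith
      rw [div_le_iff₀ (by positivity)] at h
      linarith
    · have h : f (-1)/(d (-1) * g (-1)) ≤ C := by linarith
      rw [div_le_iff₀ (by positivity)] at h
      linarith

/-- **Estimates on the canonical product `P` vanishing at the spectrum `{iλ_k^±}`.**
`P` is entire of exponential type at most `π`, it decays like `(1+|x|)^{-3} e^{√2 π √|x|}`
on the real axis, and its derivative at the zeros `iλ_k^±` admits the stated lower
bounds. -/
theorem canonical_product_estimates :
    ∃ P : ℂ → ℂ,
      TendstoLocallyUniformly Ppartial P atTop ∧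
      Differentiable ℂ P ∧
      -- exponential type at most π
      (∀ ε > (0:ℝ), ∃ C > (0:ℝ), ∀ z : ℂ, ‖P z‖ ≤ C * Real.exp ((π + ε) * ‖z‖)) ∧
      ∃ C > (0:ℝ),
        -- (a) decay on the real axis
        (∀ x : ℝ, ‖P (x:ℂ)‖ ≤ C * Real.exp (Real.sqrt 2 * π * Real.sqrt |x|)
            / (1 + |x|)^3) ∧
        -- (b) lower bound for P' at the hyperbolic zeros
        (∀ k : ℤ, k ≠ 0 → k ≠ 2 → k ≠ -2 →
          Real.exp (Real.sqrt 2 * π * Real.sqrt |(k:ℝ)|) / (C * |(k:ℝ)|^3)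
            ≤ ‖deriv P (Complex.I * lamP k)‖) ∧
        -- (c) lower bound for P' at the parabolic zeros
        (∀ k : ℤ, k ≠ 0 → k ≠ 2 → k ≠ -2 →
          Real.exp (π * (k:ℝ)^2) / (C * |(k:ℝ)|^7)
            ≤ ‖deriv P (Complex.I * lamM k)‖) := by
  obtain ⟨P, hLU, hdiff, hlim, hder⟩ := exists_P
  refine ⟨P, hLU, hdiff, type_final P hlim, ?_⟩
  obtain ⟨Ca, hCa, ha⟩ := real_final P hlim
  obtain ⟨Cb, hCb, hb⟩ := combine
    (fun k => Real.exp (Real.sqrt 2 * π * Real.sqrt |(k:ℝ)|))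
    (fun k => ‖deriv P (Complex.I * lamP k)‖) (fun k => |(k:ℝ)|^3)
    (64 * π^2 * Real.exp 216) (by positivity) (fun k => by positivity)
    (fun k hk => by have := (abs_pos (a := (k:ℝ))).mpr (by exact_mod_cast hk); positivity)
    (fun k hk => b_final P hder k hk)
    (fun k hk => by
      rw [norm_pos_iff, I_lamP]
      rcases hk with rfl | rfl
      · have := one_p P hder 1 (Or.inl rfl)
        simpa using this
      · have := one_p P hder (-1) (Or.inr rfl)
        simpa using this)
  obtain ⟨Cc, hCc, hc⟩ := combine
    (fun k => Real.exp (π * (k:ℝ)^2))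
    (fun k => ‖deriv P (Complex.I * lamM k)‖) (fun k => |(k:ℝ)|^7)
    (32 * π * Real.exp (3*π) * Real.exp 508) (by positivity) (fun k => by positivity)
    (fun k hk => by have := (abs_pos (a := (k:ℝ))).mpr (by exact_mod_cast hk); positivity)
    (fun k hk => c_final P hder k hk)
    (fun k hk => by
      rw [norm_pos_iff, I_lamM]
      rcases hk with rfl | rfl
      · have := one_m P hder 1 (Or.inl rfl)
        simpa using this
      · have := one_m P hder (-1) (Or.inr rfl)
        simpa using this)
  refine ⟨Ca + Cb + Cc, by positivity, ?_, hb _ (by linarith), hc _ (by linarith)⟩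
  intro x
  refine (ha x).trans ?_
  gcongr
  linarith
end
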